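/- arXiv:1705.08777 — 4 statements merged into one kernel-verified Lean document; each statement's English description precedes it below -/
import Mathlib

section
/- Let g ≥ 2 and let H ⊆ GSp_{2g}(ℤ_2) be a subgroup containing the kernel of the reduction map GSp_{2g}(ℤ_2) → GSp_{2g}(ℤ/2ℤ) (equivalently, H equals the full preimage of its mod-2 image). Then the closure of the commutator subgroup of H contains the kernel of the reduction map Sp_{2g}(ℤ_2) → Sp_{2g}(ℤ/4ℤ). -/
open Matrix

/-- The standard symplectic matrix `Ω`, block-diagonal with `2×2` blocks `[[0,1],[-1,0]]`. -/
def OmegaMat (g : ℕ) (R : Type) [CommRing R] : Matrix (Fin (2*g)) (Fin (2*g)) R :=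
  Matrix.of fun i j =>
    if (i : ℕ) + 1 = (j : ℕ) ∧ (j : ℕ) % 2 = 1 then 1
    else if (j : ℕ) + 1 = (i : ℕ) ∧ (i : ℕ) % 2 = 1 then -1 else 0

/-- The symplectic group `Sp_{2g}(R)`, as a set of invertible matrices:
those `S` with `SᵀΩS = Ω`. -/
def SpSet (g : ℕ) (R : Type) [CommRing R] : Set (GL (Fin (2*g)) R) :=
  {S | (S : Matrix (Fin (2*g)) (Fin (2*g)) R)ᵀ * OmegaMat g R * S = OmegaMat g R}

/-- The general symplectic group `GSp_{2g}(R)`, as a set of invertible matrices: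
those `S` with `SᵀΩS = m·Ω` for some unit `m` (the multiplier). -/
def GSpSet (g : ℕ) (R : Type) [CommRing R] : Set (GL (Fin (2*g)) R) :=
  {S | ∃ m : Rˣ, (S : Matrix (Fin (2*g)) (Fin (2*g)) R)ᵀ * OmegaMat g R * S = (m : R) • OmegaMat g R}

/-- Entrywise mod-2 reduction `GL_{2g}(ℤ_2) → GL_{2g}(ℤ/2ℤ)`. -/
noncomputable def redMod2 (g : ℕ) : GL (Fin (2*g)) ℤ_[2] →* GL (Fin (2*g)) (ZMod 2) :=
  Units.map ((PadicInt.toZMod).mapMatrix.toMonoidHom)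

/-- Entrywise mod-4 reduction `GL_{2g}(ℤ_2) → GL_{2g}(ℤ/4ℤ)`. -/
noncomputable def redMod4 (g : ℕ) : GL (Fin (2*g)) ℤ_[2] →* GL (Fin (2*g)) (ZMod (2^2)) :=
  Units.map ((PadicInt.toZModPow 2).mapMatrix.toMonoidHom)

/-- The kernel of the reduction map `GSp_{2g}(ℤ_2) → GSp_{2g}(ℤ/2ℤ)`: the elements of
`GSp_{2g}(ℤ_2)` that reduce to the identity mod 2, as a subgroup of `GL_{2g}(ℤ_2)`. -/
def GSpKer (g : ℕ) : Subgroup (GL (Fin (2*g)) ℤ_[2]) where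
  carrier := {x | x ∈ GSpSet g ℤ_[2] ∧ redMod2 g x = 1}
  one_mem' := by
    refine ⟨⟨1, ?_⟩, MonoidHom.map_one _⟩
    simp
  mul_mem' := by
    rintro a b ⟨⟨m, hm⟩, ha1⟩ ⟨⟨m', hm'⟩, hb1⟩
    refine ⟨⟨m * m', ?_⟩, by rw [MonoidHom.map_mul, ha1, hb1, mul_one]⟩
    have hval : ((a * b : GL (Fin (2*g)) ℤ_[2]) : Matrix (Fin (2*g)) (Fin (2*g)) ℤ_[2])
        = (a : Matrix (Fin (2*g)) (Fin (2*g)) ℤ_[2]) * (b : Matrix (Fin (2*g)) (Fin (2*g)) ℤ_[2]) :=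
      Units.val_mul a b
    rw [hval, Matrix.transpose_mul]
    calc (b : Matrix (Fin (2*g)) (Fin (2*g)) ℤ_[2])ᵀ * (a : Matrix (Fin (2*g)) (Fin (2*g)) ℤ_[2])ᵀ
          * OmegaMat g ℤ_[2]
          * ((a : Matrix (Fin (2*g)) (Fin (2*g)) ℤ_[2]) * (b : Matrix (Fin (2*g)) (Fin (2*g)) ℤ_[2]))
        = (b : Matrix (Fin (2*g)) (Fin (2*g)) ℤ_[2])ᵀ
            * (((a : Matrix (Fin (2*g)) (Fin (2*g)) ℤ_[2])ᵀ * OmegaMat g ℤ_[2]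
              * (a : Matrix (Fin (2*g)) (Fin (2*g)) ℤ_[2]))
            * (b : Matrix (Fin (2*g)) (Fin (2*g)) ℤ_[2])) := by
          simp only [mul_assoc]
      _ = (b : Matrix (Fin (2*g)) (Fin (2*g)) ℤ_[2])ᵀ
            * (((m : ℤ_[2]) • OmegaMat g ℤ_[2]) * (b : Matrix (Fin (2*g)) (Fin (2*g)) ℤ_[2])) := by
          rw [hm]
      _ = (m : ℤ_[2]) • ((b : Matrix (Fin (2*g)) (Fin (2*g)) ℤ_[2])ᵀ * OmegaMat g ℤ_[2]
            * (b : Matrix (Fin (2*g)) (Fin (2*g)) ℤ_[2])) := by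
          simp only [Matrix.smul_mul, Matrix.mul_smul, mul_assoc]
      _ = (m : ℤ_[2]) • ((m' : ℤ_[2]) • OmegaMat g ℤ_[2]) := by rw [hm']
      _ = ((m * m' : ℤ_[2]ˣ) : ℤ_[2]) • OmegaMat g ℤ_[2] := by
          rw [smul_smul, Units.val_mul]
  inv_mem' := by
    rintro a ⟨⟨m, hm⟩, ha1⟩
    refine ⟨⟨m⁻¹, ?_⟩, by rw [MonoidHom.map_inv, ha1, inv_one]⟩
    set A : Matrix (Fin (2*g)) (Fin (2*g)) ℤ_[2] := (a : Matrix (Fin (2*g)) (Fin (2*g)) ℤ_[2]) with hA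
    set B : Matrix (Fin (2*g)) (Fin (2*g)) ℤ_[2] :=
      ((a⁻¹ : GL (Fin (2*g)) ℤ_[2]) : Matrix (Fin (2*g)) (Fin (2*g)) ℤ_[2]) with hB
    have hAB : A * B = 1 := a.mul_inv
    have h2 : OmegaMat g ℤ_[2] = ((m⁻¹ : ℤ_[2]ˣ) : ℤ_[2]) • (Aᵀ * OmegaMat g ℤ_[2] * A) := by
      rw [hm, smul_smul, Units.inv_mul, one_smul]
    calc Bᵀ * OmegaMat g ℤ_[2] * B
        = Bᵀ * (((m⁻¹ : ℤ_[2]ˣ) : ℤ_[2]) • (Aᵀ * OmegaMat g ℤ_[2] * A)) * B := by rw [← h2]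
      _ = ((m⁻¹ : ℤ_[2]ˣ) : ℤ_[2]) • ((Bᵀ * Aᵀ) * OmegaMat g ℤ_[2] * (A * B)) := by
          simp only [Matrix.smul_mul, Matrix.mul_smul, mul_assoc]
      _ = ((m⁻¹ : ℤ_[2]ˣ) : ℤ_[2]) • OmegaMat g ℤ_[2] := by
          rw [← Matrix.transpose_mul, hAB]
          simp


namespace MaxMon

open scoped commutatorElement

variable {ι : Type} [Fintype ι] [DecidableEq ι]

abbrev Z2 := ℤ_[2]

/-- Upper unipotent block matrix. -/
noncomputable def U (X : Matrix ι ι Z2) : GL (ι ⊕ ι) Z2 :=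
  ⟨fromBlocks 1 X 0 1, fromBlocks 1 (-X) 0 1, by simp [fromBlocks_multiply], by
    simp [fromBlocks_multiply]⟩

/-- Lower unipotent block matrix. -/
noncomputable def L (Y : Matrix ι ι Z2) : GL (ι ⊕ ι) Z2 :=
  ⟨fromBlocks 1 0 Y 1, fromBlocks 1 0 (-Y) 1, by simp [fromBlocks_multiply], by
    simp [fromBlocks_multiply]⟩

/-- The sign element, of multiplier `-1`. -/
noncomputable def G0 (ι : Type) [Fintype ι] [DecidableEq ι] : GL (ι ⊕ ι) Z2 :=
  ⟨fromBlocks 1 0 0 (-1), fromBlocks 1 0 0 (-1), by simp [fromBlocks_multiply], by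
    simp [fromBlocks_multiply]⟩

/-- Block diagonal element. -/
noncomputable def Dg (D E : Matrix ι ι Z2) (h : D * E = 1) (h' : E * D = 1) : GL (ι ⊕ ι) Z2 :=
  ⟨fromBlocks Eᵀ 0 0 D, fromBlocks Dᵀ 0 0 E,
    by simp [fromBlocks_multiply, ← transpose_mul, h],
    by simp [fromBlocks_multiply, h', ← transpose_mul]⟩

/-- The block symplectic form. -/
noncomputable def JJ (ι : Type) [Fintype ι] [DecidableEq ι] : Matrix (ι ⊕ ι) (ι ⊕ ι) Z2 := fromBlocks 0 1 (-1) 0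

def good (p : GL (ι ⊕ ι) Z2) : Prop :=
  (∃ m : Z2ˣ, (p.1)ᵀ * JJ ι * p.1 = (m : Z2) • JJ ι) ∧ ∃ P, p.1 = 1 + (2 : Z2) • P

lemma good_U (X : Matrix ι ι Z2) (hX : Xᵀ = X) : good (U ((2 : Z2) • X)) := by
  refine ⟨⟨1, ?_⟩, fromBlocks 0 X 0 0, ?_⟩
  · simp [U, JJ, fromBlocks_transpose, fromBlocks_multiply, hX]
  · simp [U, ← fromBlocks_one, fromBlocks_smul, fromBlocks_add]

lemma good_L (X : Matrix ι ι Z2) (hX : Xᵀ = X) : good (L ((2 : Z2) • X)) := by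
  refine ⟨⟨1, ?_⟩, fromBlocks 0 0 X 0, ?_⟩
  · simp [L, JJ, fromBlocks_transpose, fromBlocks_multiply, hX]
  · simp [L, ← fromBlocks_one, fromBlocks_smul, fromBlocks_add]

lemma good_G0 : good (G0 ι) := by
  refine ⟨⟨-1, ?_⟩, fromBlocks 0 0 0 (-1), ?_⟩
  · simp [G0, JJ, fromBlocks_transpose, fromBlocks_multiply, fromBlocks_neg]
  · simp only [G0, ← fromBlocks_one, fromBlocks_smul, fromBlocks_add]
    congr 1 <;> module

variable {K : Subgroup (GL (ι ⊕ ι) Z2)}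

lemma U_mem
    (hK : ∀ p q : GL (ι ⊕ ι) Z2, good p → good q → ⁅p, q⁆ ∈ K)
    (X : Matrix ι ι Z2) (hX : Xᵀ = X) : U ((4 : Z2) • X) ∈ K := by
  have h := hK (G0 ι) (U ((2 : Z2) • (-X))) good_G0 (good_U _ (by simp [hX]))
  convert h using 1
  ext1
  simp only [commutatorElement_def, Units.val_mul]
  simp only [U, G0, Units.inv_mk, fromBlocks_multiply]
  congr 1 <;> simp
  module

lemma L_mem
    (hK : ∀ p q : GL (ι ⊕ ι) Z2, good p → good q → ⁅p, q⁆ ∈ K)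
    (X : Matrix ι ι Z2) (hX : Xᵀ = X) : L ((4 : Z2) • X) ∈ K := by
  have h := hK (G0 ι) (L ((2 : Z2) • (-X))) good_G0 (good_L _ (by simp [hX]))
  convert h using 1
  ext1
  simp only [commutatorElement_def, Units.val_mul]
  simp only [L, G0, Units.inv_mk, fromBlocks_multiply]
  congr 1 <;> simp
  module

lemma smul4_inj {A B : Matrix ι ι Z2} (h : (4 : Z2) • A = (4 : Z2) • B) : A = B := by
  ext i j
  have := congrFun (congrFun h i) j
  simpa using this

/-- Decomposition of a symplectic matrix. -/
lemma dec
    (hK : ∀ p q : GL (ι ⊕ ι) Z2, good p → good q → ⁅p, q⁆ ∈ K)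
    (x : GL (ι ⊕ ι) Z2) (A B C D E : Matrix ι ι Z2)
    (hx : x.1 = fromBlocks A ((4 : Z2) • B) ((4 : Z2) • C) D)
    (hsp : (x.1)ᵀ * JJ ι * x.1 = JJ ι) (h : D * E = 1) (h' : E * D = 1) :
    x ∈ K ↔ Dg D E h h' ∈ K := by
  have ht : Eᵀ * Dᵀ = 1 := by rw [← transpose_mul, h, transpose_one]
  have ht' : Dᵀ * Eᵀ = 1 := by rw [← transpose_mul, h', transpose_one]
  rw [hx] at hsp
  simp only [JJ, fromBlocks_transpose, fromBlocks_multiply] at hsp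
  rw [fromBlocks_inj] at hsp
  obtain ⟨h1, h2, h3, h4⟩ := hsp
  simp at h1 h2 h3 h4
  -- BᵀD symmetric
  have s1 : Bᵀ * D = Dᵀ * B := by
    apply smul4_inj
    have := h4
    rw [neg_add_eq_zero] at this
    exact this.symm
  have sX : (B * E)ᵀ = B * E := by
    calc (B * E)ᵀ = Eᵀ * (Bᵀ * D) * E := by
          rw [transpose_mul]; simp only [mul_assoc, h, mul_one]
      _ = B * E := by rw [s1, ← mul_assoc, ht, one_mul]
  -- the upper left corner
  have e1 : A = Eᵀ + (4 : Z2) • (B * E) * ((4 : Z2) • C) := by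
    have h5 : Dᵀ * A = 1 + (4 : Z2) • ((4 : Z2) • (Bᵀ * C)) := by
      have := congrArg transpose h2
      simp [transpose_mul] at this
      rw [← this]; abel
    calc A = Eᵀ * (Dᵀ * A) := by rw [← mul_assoc, ht, one_mul]
      _ = Eᵀ + (4 : Z2) • ((4 : Z2) • ((Eᵀ * Bᵀ) * C)) := by
        rw [h5]; simp [mul_add, mul_assoc]
      _ = _ := by rw [← transpose_mul, sX]; simp
  have s2 : Aᵀ * C = Cᵀ * A := by
    apply smul4_inj
    have := h1
    rw [neg_add_eq_zero] at this
    exact this.symm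
  have sY : (E * C)ᵀ = E * C := by
    have e2 : Aᵀ * C = E * C + (4 : Z2) • ((4 : Z2) • (Cᵀ * (B * E) * C)) := by
      rw [e1]; simp [transpose_mul, add_mul]; rw [← transpose_mul, sX]
    have e3 : Cᵀ * A = Cᵀ * Eᵀ + (4 : Z2) • ((4 : Z2) • (Cᵀ * (B * E) * C)) := by
      rw [e1]; simp [mul_add, mul_assoc]
    rw [e2, e3] at s2
    rw [transpose_mul]; exact (add_right_cancel s2).symm
  have key : x = U ((4 : Z2) • (B * E)) * Dg D E h h' * L ((4 : Z2) • (E * C)) := by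
    ext1
    rw [hx]
    simp only [Units.val_mul, U, L, Dg, fromBlocks_multiply]
    congr 1
    · rw [e1]; simp [mul_assoc]; rw [← mul_assoc D E C, h, one_mul]
    · simp [mul_assoc, h']
    · simp [← mul_assoc, h]
    · simp
  have hU := U_mem hK _ sX
  have hL := L_mem hK _ sY
  rw [key, K.mul_mem_cancel_right hL, K.mul_mem_cancel_left hU]

lemma unit4 (r : Z2) : IsUnit (1 + 4 * r) := by
  by_contra h
  have h1 : ‖1 + 4 * r‖ < 1 := PadicInt.mem_nonunits.mp h
  have h2 : ‖(2 : Z2) * (2 * r)‖ < 1 := by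
    apply PadicInt.mem_nonunits.mp
    intro h3
    have := isUnit_of_mul_isUnit_left h3
    exact PadicInt.prime_p.not_isUnit this
  have h3 := PadicInt.nonarchimedean (1 + 4 * r) (-(2 * (2 * r)))
  have h4 : (1 + 4 * r) + (-(2 * (2 * r))) = (1 : Z2) := by ring
  rw [h4, norm_neg, norm_one] at h3
  exact absurd h3 (not_le.mpr (max_lt h1 h2))

lemma inv_of (P : Matrix ι ι Z2) : ∃ E, (1 + (4 : Z2) • P) * E = 1 ∧ E * (1 + (4 : Z2) • P) = 1 := by
  have : IsUnit (1 + (4 : Z2) • P) := by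
    rw [Matrix.isUnit_iff_isUnit_det, Matrix.det_one_add_smul]
    convert unit4 (P.trace + (Polynomial.eval 4 (det (1 + (Polynomial.X : Polynomial Z2) • P.map Polynomial.C)).divX.divX) * 4) using 1
    ring
  obtain ⟨u, hu⟩ := this
  exact ⟨(u⁻¹).1, by rw [← hu]; simp, by rw [← hu]; simp⟩

/-- One row operation. -/
lemma row_mem
    (hK : ∀ p q : GL (ι ⊕ ι) Z2, good p → good q → ⁅p, q⁆ ∈ K)
    (k : ι) (v : ι → Z2) (D E : Matrix ι ι Z2) (h : D * E = 1) (h' : E * D = 1)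
    (hD : D = 1 + (4 : Z2) • vecMulVec (Pi.single k 1) v) : Dg D E h h' ∈ K := by
  set X : Matrix ι ι Z2 := -(vecMulVec (Pi.single k 1) v + vecMulVec v (Pi.single k 1)
    - v k • vecMulVec (Pi.single k 1) (Pi.single k 1)) with hX
  set Y : Matrix ι ι Z2 := vecMulVec (Pi.single k 1) (Pi.single k 1) with hY
  have sY : Yᵀ = Y := by simp [hY, transpose_vecMulVec]
  have sX : Xᵀ = X := by simp [hX, transpose_vecMulVec, sY]; abel
  have hYX : Y * X = - vecMulVec (Pi.single k 1) v := by
    simp [hX, hY, mul_sub, mul_add, vecMulVec_mul_vecMulVec]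
  have gU := good_U X sX
  have gL := good_L Y sY
  have hc := hK _ _ gU gL
  rw [dec hK (D := D) (E := E) (h := h) (h' := h')
    (A := 1 + (4 : Z2) • (X * Y) + (4 : Z2) • (4 : Z2) • (X * Y * X * Y))
    (B := - (2 : Z2) • (X * Y * X)) (C := (2 : Z2) • (Y * X * Y))] at hc
  · exact hc
  · have : D = 1 - (4 : Z2) • (Y * X) := by rw [hD, hYX]; simp
    rw [this]
    simp only [commutatorElement_def, Units.val_mul]
    simp only [U, L, Units.inv_mk, fromBlocks_multiply]
    congr 1 <;> simp [mul_add, add_mul, mul_assoc] <;> module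
  · have hsU : ((U ((2:Z2) • X)).1)ᵀ * JJ ι * (U ((2:Z2) • X)).1 = JJ ι := by
      simp [U, JJ, fromBlocks_transpose, fromBlocks_multiply, sX]
    have hsU' : ((U ((2:Z2) • X))⁻¹.1)ᵀ * JJ ι * (U ((2:Z2) • X))⁻¹.1 = JJ ι := by
      simp [U, JJ, fromBlocks_transpose, fromBlocks_multiply, sX]
    have hsL : ((L ((2:Z2) • Y)).1)ᵀ * JJ ι * (L ((2:Z2) • Y)).1 = JJ ι := by
      simp [L, JJ, fromBlocks_transpose, fromBlocks_multiply, sY]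
    have hsL' : ((L ((2:Z2) • Y))⁻¹.1)ᵀ * JJ ι * (L ((2:Z2) • Y))⁻¹.1 = JJ ι := by
      simp [L, JJ, fromBlocks_transpose, fromBlocks_multiply, sY]
    have hmul : ∀ a b : Matrix (ι ⊕ ι) (ι ⊕ ι) Z2, aᵀ * JJ ι * a = JJ ι → bᵀ * JJ ι * b = JJ ι →
        (a * b)ᵀ * JJ ι * (a * b) = JJ ι := by
      intro a b ha hb
      calc (a * b)ᵀ * JJ ι * (a * b) = bᵀ * (aᵀ * JJ ι * a) * b := by
            rw [transpose_mul]; simp only [mul_assoc]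
        _ = _ := by rw [ha, hb]
    rw [commutatorElement_def, Units.val_mul, Units.val_mul, Units.val_mul]
    exact hmul _ _ (hmul _ _ (hmul _ _ hsU hsL) hsU') hsL'

lemma Dg_congr (D D' E E' : Matrix ι ι Z2) (h : D * E = 1) (h' : E * D = 1)
    (k : D' * E' = 1) (k' : E' * D' = 1) :
    Dg (D * D') (E' * E) (by rw [mul_assoc, ← mul_assoc D', k, one_mul, h])
      (by rw [mul_assoc, ← mul_assoc E, h', one_mul, k']) = Dg D E h h' * Dg D' E' k k' := by
  ext1
  simp [Dg, fromBlocks_multiply, transpose_mul]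

lemma Dg_mem
    (hK : ∀ p q : GL (ι ⊕ ι) Z2, good p → good q → ⁅p, q⁆ ∈ K)
    (s : Finset ι) : ∀ (P D E : Matrix ι ι Z2) (h : D * E = 1) (h' : E * D = 1)
    (_ : D = 1 + (4 : Z2) • P) (_ : ∀ i ∉ s, P i = 0), Dg D E h h' ∈ K := by
  induction s using Finset.induction_on with
  | empty =>
    intro P D E h h' hD hP
    have : P = 0 := by ext i j; rw [hP i (by simp)]; rfl
    have hD1 : D = 1 := by rw [hD, this]; simp
    have hE1 : E = 1 := by rw [hD1] at h; simpa using h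
    have : Dg D E h h' = 1 := by ext1; simp [Dg, hD1, hE1]
    rw [this]; exact K.one_mem
  | insert k s hk ih =>
    intro P D E h h' hD hP
    have hu : IsUnit (1 + 4 * P k k) := unit4 _
    obtain ⟨u, hu⟩ := hu
    set v : ι → Z2 := fun j => -(u⁻¹).1 * P k j with hv
    obtain ⟨E', k1, k2⟩ := inv_of (vecMulVec (Pi.single k 1) v)
    have hr := row_mem hK k v _ E' k1 k2 rfl
    rw [← K.mul_mem_cancel_right hr, ← Dg_congr]
    refine ih (P + vecMulVec (Pi.single k 1) v + (4 : Z2) • (P * vecMulVec (Pi.single k 1) v))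
      _ _ _ _ ?_ ?_
    · rw [hD]; simp [mul_add, add_mul]; abel
    · intro i hi
      ext j
      have : (P * vecMulVec (Pi.single k 1) v) i j = P i k * v j := by
        rw [mul_vecMulVec]; simp [vecMulVec_apply]
      simp only [Matrix.add_apply, Matrix.smul_apply, this, vecMulVec_apply, Pi.zero_apply, smul_eq_mul]
      by_cases hik : i = k
      · subst hik
        have : (u⁻¹).1 * (1 + 4 * P i i) = 1 := by rw [← hu]; simp
        simp only [hv, Pi.single_eq_same]
        linear_combination (-P i j) * this
      · have : P i = 0 := hP i (by simp [hik, hi])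
        simp [this, hik]

theorem sp4_mem
    (hK : ∀ p q : GL (ι ⊕ ι) Z2, good p → good q → ⁅p, q⁆ ∈ K)
    (x : GL (ι ⊕ ι) Z2) (hsp : (x.1)ᵀ * JJ ι * x.1 = JJ ι)
    (P : Matrix (ι ⊕ ι) (ι ⊕ ι) Z2) (hx : x.1 = 1 + (4 : Z2) • P) : x ∈ K := by
  obtain ⟨E, h, h'⟩ := inv_of P.toBlocks₂₂
  rw [dec hK x (1 + (4 : Z2) • P.toBlocks₁₁) P.toBlocks₁₂ P.toBlocks₂₁ _ E ?_ hsp h h']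
  · exact Dg_mem hK Finset.univ _ _ _ _ _ rfl (by simp)
  · rw [hx]
    conv_lhs => rw [← fromBlocks_toBlocks P]
    simp [← fromBlocks_one, fromBlocks_smul, fromBlocks_add]

/-- interleaving equivalence -/
def eqv (g : ℕ) : Fin g ⊕ Fin g ≃ Fin (2 * g) where
  toFun := Sum.elim (fun i => ⟨2 * i.1, by omega⟩) (fun i => ⟨2 * i.1 + 1, by omega⟩)
  invFun j := if j.1 % 2 = 0 then Sum.inl ⟨j.1 / 2, by omega⟩ else Sum.inr ⟨j.1 / 2, by omega⟩
  left_inv := by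
    rintro (i | i)
    · simp
    · simp; 
      ext; simp; omega
  right_inv := by
    intro j
    by_cases h : j.1 % 2 = 0
    · simp [h]; ext; simp; omega
    · simp [h]; ext; simp; omega

lemma Omega_eq (g : ℕ) : OmegaMat g Z2 = reindexAlgEquiv Z2 Z2 (eqv g) (JJ (Fin g)) := by
  rw [← (reindexAlgEquiv Z2 Z2 (eqv g)).symm_apply_eq]
  ext i j
  rcases i with i | i <;> rcases j with j | j <;>
    simp [eqv, OmegaMat, JJ, one_apply, Fin.ext_iff] <;> grind

end MaxMon

open MaxMon
open scoped commutatorElement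

theorem maximal_monodromy_stmt6 (g : ℕ) (hg : 2 ≤ g)
    (H : Subgroup (GL (Fin (2*g)) ℤ_[2]))
    (hGSp : (H : Set (GL (Fin (2*g)) ℤ_[2])) ⊆ GSpSet g ℤ_[2])
    (hker : GSpKer g ≤ H) :
    {x : GL (Fin (2*g)) ℤ_[2] | x ∈ SpSet g ℤ_[2] ∧ redMod4 g x = 1}
      ⊆ closure ((⁅H, H⁆ : Subgroup (GL (Fin (2*g)) ℤ_[2])) : Set (GL (Fin (2*g)) ℤ_[2])) := by
  rintro x ⟨hsp, hx⟩
  apply subset_closure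
  set r := reindexAlgEquiv Z2 Z2 (eqv g) with hr
  have hrt : ∀ M, r Mᵀ = (r M)ᵀ := fun M => by simp [hr, transpose_reindex]
  set φ : GL (Fin g ⊕ Fin g) Z2 ≃* GL (Fin (2*g)) Z2 := Units.mapEquiv r.toMulEquiv with hφ
  have hφv : ∀ p, (φ p).1 = r p.1 := fun p => rfl
  have hgood : ∀ p, good p → φ p ∈ H := by
    rintro p ⟨⟨m, hm⟩, P, hP⟩
    apply hker
    refine ⟨⟨m, ?_⟩, ?_⟩
    · rw [hφv, Omega_eq, ← hrt, ← map_mul, ← map_mul, hm, map_smul]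
    · ext1
      change (PadicInt.toZMod).mapMatrix (φ p).1 = 1
      rw [hφv, hP, map_add, map_one, map_add, map_one, map_smul]
      ext i j
      simp
      left; rw [show (2 : ℤ_[2]) = ((2 : ℕ) : ℤ_[2]) by norm_num, map_natCast]; exact ZMod.natCast_self 2
  have hfin : φ.symm x ∈ (⁅H, H⁆).comap φ.toMonoidHom := by
    have hval : r (φ.symm x).1 = x.1 := by rw [← hφv]; simp
    have hP : ∃ P, x.1 = 1 + (4 : Z2) • P := by
      have h1 : (PadicInt.toZModPow 2).mapMatrix x.1 = 1 := congrArg Units.val hx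
      have h2 : ∀ i j, ∃ t : Z2, x.1 i j - (1 : Matrix _ _ Z2) i j = 4 * t := by
        intro i j
        have h3 : PadicInt.toZModPow 2 (x.1 i j - (1 : Matrix _ _ Z2) i j) = 0 := by
          have := congrFun (congrFun h1 i) j
          rw [map_sub, sub_eq_zero]
          rw [RingHom.mapMatrix_apply, map_apply] at this
          rw [this]
          simp only [one_apply]; split_ifs <;> simp
        rw [← RingHom.mem_ker, PadicInt.ker_toZModPow, Ideal.mem_span_singleton] at h3
        obtain ⟨t, ht⟩ := h3
        exact ⟨t, by rw [ht]; norm_num⟩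
      choose P hP using h2
      refine ⟨of P, ?_⟩
      ext i j
      simp [← hP i j]
    obtain ⟨P, hP⟩ := hP
    refine sp4_mem ?_ _ ?_ (r.symm P) ?_
    · intro p q hp hq
      rw [Subgroup.mem_comap]
      change φ ⁅p, q⁆ ∈ _
      rw [map_commutatorElement]
      exact Subgroup.commutator_mem_commutator (hgood p hp) (hgood q hq)
    · apply r.injective
      rw [map_mul, map_mul, hrt, hval, ← Omega_eq]
      exact hsp
    · apply r.injective
      rw [hval, hP, map_add, map_one, map_smul, AlgEquiv.apply_symm_apply]
  rw [Subgroup.mem_comap] at hfin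
  change φ (φ.symm x) ∈ _ at hfin
  simpa using hfin
end

section
/- Let g ≥ 2 and transport the permutation action of S_{2g+2} on W to M via the isomorphism ψ. Then for 1 ≤ n ≤ g, the transposition (2n, 2n+1) acts on M as the operator id + (x_{11} + x_{12} + x_{21} + x_{22}) ⊗ y_{nn}, and for 0 ≤ n ≤ g, the transposition (2n+1, 2n+2) acts on M as the operator id + x_{12} ⊗ (y_{nn} + y_{(n+1)n} + y_{n(n+1)} + y_{(n+1)(n+1)}), where any term whose index lies outside {1,…,g} is interpreted as zero. -/
open Matrix

/-- The all-ones vector `t ∈ V = (ℤ/2ℤ)^{2g+2}`. -/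
def tvec (g : ℕ) : Fin (2*g+2) → ZMod 2 := fun _ => 1

/-- The line spanned by `t`. -/
def tline (g : ℕ) : Submodule (ZMod 2) (Fin (2*g+2) → ZMod 2) :=
  Submodule.span (ZMod 2) {tvec g}

/-- `t^⊥`: the vectors of `V` orthogonal to `t` for the standard bilinear form
`⟨u,v⟩ = ∑ uᵢvᵢ`, i.e. those whose coordinates sum to zero. -/
def tperp (g : ℕ) : Set (Fin (2*g+2) → ZMod 2) := {v | ∑ i, v i = 0}

/-- The matrix of the map `ψ : M → V` sending the symplectic basis vector `f_{1,n}`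
(column `2n-2`, 0-based) of `M = (ℤ/2ℤ)^{2g}` to `ē_1 + ⋯ + ē_{2n}` and `f_{2,n}`
(column `2n-1`) to `ē_{2n+1} + ē_1 + ⋯ + ē_{2n-1}`; `ψ` composed with the quotient map
`t^⊥ → W = t^⊥/span(t)` is the identification of `M` with `W` used to realize the
isometries of `W` as the matrix group `Sp_{2g}(ℤ/2ℤ)`. -/
def PsiMat (g : ℕ) : Matrix (Fin (2*g+2)) (Fin (2*g)) (ZMod 2) :=
  Matrix.of fun k j =>
    if (j : ℕ) % 2 = 0 then (if (k : ℕ) < (j : ℕ) + 2 then 1 else 0)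
    else (if (k : ℕ) < (j : ℕ) ∨ (k : ℕ) = (j : ℕ) + 1 then 1 else 0)

/-- The permutation matrix of `σ`, acting on coordinates of `V`: `(P_σ v) k = v (σ⁻¹ k)`. -/
def permMat (g : ℕ) (σ : Equiv.Perm (Fin (2*g+2))) :
    Matrix (Fin (2*g+2)) (Fin (2*g+2)) (ZMod 2) :=
  Matrix.of fun k j => if σ j = k then 1 else 0

/-- `A ∈ Sp_{2g}(ℤ/2ℤ)` is the matrix (w.r.t. the symplectic basis carried by `ψ`) of the
action of the permutation `σ ∈ S_{2g+2}` on `W = t^⊥/span(t)`: this says that each column of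
`Ψ·A − P_σ·Ψ` lies in `span(t)`, i.e. `ψ(A·m) ≡ σ·ψ(m) mod t` for every `m ∈ M`.
The embedded copy of `S_{2g+2}` inside `Sp_{2g}(ℤ/2ℤ)` is the set of matrices representing
some permutation in this sense. -/
def representsPerm (g : ℕ) (A : Matrix (Fin (2*g)) (Fin (2*g)) (ZMod 2))
    (σ : Equiv.Perm (Fin (2*g+2))) : Prop :=
  ∀ j, (fun k => (PsiMat g * A - permMat g σ * PsiMat g) k j) ∈ tline g

/-- The operator `id + (x_{11} + x_{12} + x_{21} + x_{22}) ⊗ y_{nn}` on `M` (for `1 ≤ n ≤ g`,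
in `1`-based indexing; `0`-based, the `(k,j)` entry is `δ_{kj}` plus the indicator that both
`k` and `j` lie in the block `{2n-2, 2n-1}`). -/
def TEvenMat (g n : ℕ) : Matrix (Fin (2*g)) (Fin (2*g)) (ZMod 2) :=
  Matrix.of fun k j => (if k = j then 1 else 0) +
    (if (k : ℕ)/2 + 1 = n ∧ (j : ℕ)/2 + 1 = n then 1 else 0)

/-- The operator `id + x_{12} ⊗ (y_{nn} + y_{(n+1)n} + y_{n(n+1)} + y_{(n+1)(n+1)})` on `M`
(any term with an out-of-range index being zero; `0`-based, the `(k,j)` entry is `δ_{kj}` plus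
the indicator that `k ∈ {2n-2, 2n}` is an `x_1`-row and `j ∈ {2n-1, 2n+1}` is an `x_2`-column,
out-of-range indices being excluded automatically by the bounds on `Fin (2g)`). -/
def TOddMat (g n : ℕ) : Matrix (Fin (2*g)) (Fin (2*g)) (ZMod 2) :=
  Matrix.of fun k j => (if k = j then 1 else 0) +
    (if ((k : ℕ) + 2 = 2*n ∨ (k : ℕ) = 2*n) ∧ ((j : ℕ) + 1 = 2*n ∨ (j : ℕ) = 2*n + 1)
      then 1 else 0)

theorem perm_mul_psi (g : ℕ) (a b k : Fin (2*g+2)) (j : Fin (2*g)) :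
    (permMat g (Equiv.swap a b) * PsiMat g) k j = PsiMat g (Equiv.swap a b k) j := by
  rw [Matrix.mul_apply, Finset.sum_eq_single (Equiv.swap a b k)]
  · simp [permMat]
  · intro l _ hl
    have : Equiv.swap a b l ≠ k := by
      rintro rfl
      simp at hl
    simp [permMat, this]
  · simp

theorem psi_mul_add (g : ℕ) (p : Fin (2*g) → Prop) (q : Prop) [DecidablePred p] [Decidable q]
    (k : Fin (2*g+2)) (j : Fin (2*g)) (A : Matrix (Fin (2*g)) (Fin (2*g)) (ZMod 2))
    (hA : ∀ l, A l j = (if l = j then 1 else 0) + (if p l ∧ q then 1 else 0)) :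
    (PsiMat g * A) k j = PsiMat g k j +
      (if q then ∑ l, (if p l then PsiMat g k l else 0) else 0) := by
  rw [Matrix.mul_apply]
  simp only [hA, mul_add, Finset.sum_add_distrib]
  congr 1
  · simp
  · by_cases hq : q <;> simp [hq]

theorem sum_pair (g : ℕ) (f : Fin (2*g) → ZMod 2) (a b : Fin (2*g)) (hab : a ≠ b)
    (p : Fin (2*g) → Prop) [DecidablePred p] (hp : ∀ l, p l ↔ l = a ∨ l = b) :
    ∑ l, (if p l then f l else 0) = f a + f b := by
  rw [← Finset.sum_filter]
  have : Finset.univ.filter p = {a, b} := by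
    ext l
    simp [hp]
  rw [this, Finset.sum_pair hab]

theorem sum_one (g : ℕ) (f : Fin (2*g) → ZMod 2) (a : Fin (2*g))
    (p : Fin (2*g) → Prop) [DecidablePred p] (hp : ∀ l, p l ↔ l = a) :
    ∑ l, (if p l then f l else 0) = f a := by
  simp [hp]

theorem mem_tline (g : ℕ) (c : ZMod 2) (v : Fin (2*g+2) → ZMod 2) (h : ∀ k, v k = c) :
    v ∈ tline g := by
  rw [tline, Submodule.mem_span_singleton]
  exact ⟨c, by ext k; simp [tvec, h]⟩

theorem zmod_two_add_self : (1 : ZMod 2) + 1 = 0 := by decide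

set_option maxHeartbeats 4000000 in
/-- Transporting the permutation action of `S_{2g+2}` on `W` to `M` via the isomorphism `ψ`:
for `1 ≤ n ≤ g` the transposition `(2n, 2n+1)` (1-based) acts on `M` as
`id + (x_{11}+x_{12}+x_{21}+x_{22}) ⊗ y_{nn}`, and for `0 ≤ n ≤ g` the transposition
`(2n+1, 2n+2)` (1-based) acts on `M` as
`id + x_{12} ⊗ (y_{nn} + y_{(n+1)n} + y_{n(n+1)} + y_{(n+1)(n+1)})`,
terms with out-of-range indices being zero. -/
theorem maximal_monodromy_stmt9 (g : ℕ) (hg : 2 ≤ g) :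
    (∀ n : ℕ, 1 ≤ n → (h2 : n ≤ g) →
      representsPerm g (TEvenMat g n)
        (Equiv.swap (⟨2*n-1, by omega⟩ : Fin (2*g+2)) (⟨2*n, by omega⟩ : Fin (2*g+2)))) ∧
    (∀ n : ℕ, (h2 : n ≤ g) →
      representsPerm g (TOddMat g n)
        (Equiv.swap (⟨2*n, by omega⟩ : Fin (2*g+2)) (⟨2*n+1, by omega⟩ : Fin (2*g+2)))) := by
  have e := zmod_two_add_self
  refine ⟨fun n h1 h2 j => mem_tline g 0 _ fun k => ?_, fun n h2 j => ?_⟩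
  · rw [Matrix.sub_apply, perm_mul_psi,
      psi_mul_add g (fun l => (l : ℕ)/2 + 1 = n) ((j : ℕ)/2 + 1 = n) k j _ (fun l => rfl),
      sum_pair g _ ⟨2*n-2, by omega⟩ ⟨2*n-1, by omega⟩ (by simp [Fin.ext_iff]; omega) _
        (fun l => by simp only [Fin.ext_iff]; omega), Equiv.swap_apply_def]
    obtain ⟨k, hk⟩ := k
    obtain ⟨j, hj⟩ := j
    simp only [PsiMat, Matrix.of_apply, Fin.ext_iff, apply_ite Fin.val]
    have p1 : (2*n-2) % 2 = 0 := by omega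
    have p2 : ¬ (2*n-1) % 2 = 0 := by omega
    simp only [p1, p2, if_true, if_false]
    split_ifs <;> first | omega | decide
  · refine mem_tline g (if n = g ∧ (j : ℕ) + 1 = 2 * n then 1 else 0) _ fun k => ?_
    rw [Matrix.sub_apply, perm_mul_psi,
      psi_mul_add g (fun l => (l : ℕ) + 2 = 2*n ∨ (l : ℕ) = 2*n)
        ((j : ℕ) + 1 = 2*n ∨ (j : ℕ) = 2*n + 1) k j _ (fun l => rfl), Equiv.swap_apply_def]
    have p1 : (2*n-2) % 2 = 0 := by omega
    have p2 : (2*n) % 2 = 0 := by omega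
    rcases Nat.eq_zero_or_pos n with h0 | h0
    · rw [sum_one g _ ⟨2*n, by omega⟩ _ (fun l => by simp only [Fin.ext_iff]; omega)]
      obtain ⟨k, hk⟩ := k
      obtain ⟨j, hj⟩ := j
      simp only [PsiMat, Matrix.of_apply, Fin.ext_iff, apply_ite Fin.val]
      simp only [p2, if_true]
      split_ifs <;> first | omega | decide
    rcases Nat.eq_or_lt_of_le h2 with h3 | h3
    · rw [sum_one g _ ⟨2*n-2, by omega⟩ _ (fun l => by simp only [Fin.ext_iff]; omega)]
      obtain ⟨k, hk⟩ := k
      obtain ⟨j, hj⟩ := j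
      simp only [PsiMat, Matrix.of_apply, Fin.ext_iff, apply_ite Fin.val]
      simp only [p1, if_true]
      split_ifs <;> first | omega | decide
    · rw [sum_pair g _ ⟨2*n-2, by omega⟩ ⟨2*n, by omega⟩ (by simp [Fin.ext_iff]; omega) _
        (fun l => by simp only [Fin.ext_iff]; omega)]
      obtain ⟨k, hk⟩ := k
      obtain ⟨j, hj⟩ := j
      simp only [PsiMat, Matrix.of_apply, Fin.ext_iff, apply_ite Fin.val]
      simp only [p1, p2, if_true]
      split_ifs <;> first | omega | decide
end

section
/- Let g ≥ 2 and let G ⊆ GSp_{2g}(ℤ/4ℤ) be a subgroup containing the kernel of the reduction map GSp_{2g}(ℤ/4ℤ) → GSp_{2g}(ℤ/2ℤ), and suppose that the image of G in Sp_{2g}(ℤ/2ℤ) contains the embedded copy of S_{2g+1}. Then the commutator subgroup [G,G] contains the kernel of the reduction map Sp_{2g}(ℤ/4ℤ) → Sp_{2g}(ℤ/2ℤ). -/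
open Matrix

/-- Entrywise reduction `GL_{2g}(ℤ/4ℤ) → GL_{2g}(ℤ/2ℤ)`. -/
def red42 (g : ℕ) : GL (Fin (2*g)) (ZMod 4) →* GL (Fin (2*g)) (ZMod 2) :=
  Units.map ((ZMod.castHom (show (2:ℕ) ∣ 4 by norm_num) (ZMod 2)).mapMatrix.toMonoidHom)

namespace MM

abbrev M2 (g : ℕ) := Matrix (Fin (2*g)) (Fin (2*g)) (ZMod 2)
abbrev M4 (g : ℕ) := Matrix (Fin (2*g)) (Fin (2*g)) (ZMod 4)

/-- reduction on matrices -/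
def rd (g : ℕ) : M4 g →+* M2 g :=
  (ZMod.castHom (show (2:ℕ) ∣ 4 by norm_num) (ZMod 2)).mapMatrix

lemma red42_val (g : ℕ) (x : GL (Fin (2*g)) (ZMod 4)) :
    ((red42 g x : GL (Fin (2*g)) (ZMod 2)) : M2 g) = rd g (x : M4 g) := rfl

lemma four_eq_zero (g : ℕ) : (4 : M4 g) = 0 := by
  have : ((4 : ℕ) : M4 g) = 0 := by
    rw [← Matrix.diagonal_natCast]
    ext i j
    simp [Matrix.diagonal_apply]
    intro _
    decide
  exact_mod_cast this

lemma two_smul_four (g : ℕ) (X : M4 g) : (4 : ℕ) • X = 0 := by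
  ext i j
  simp only [Matrix.smul_apply, Matrix.zero_apply]
  generalize X i j = a
  revert a; decide

lemma Emul (g : ℕ) (X Y : M4 g) :
    (1 + (2:ℕ) • X) * (1 + (2:ℕ) • Y) = 1 + (2:ℕ) • (X + Y) := by
  have h := two_smul_four g (X * Y)
  have : (1 + (2:ℕ) • X) * (1 + (2:ℕ) • Y) = 1 + (2:ℕ) • (X + Y) + (4:ℕ) • (X * Y) := by
    noncomm_ring
  rw [this, h, add_zero]

lemma Einv (g : ℕ) (X : M4 g) : (1 + (2:ℕ) • X) * (1 + (2:ℕ) • X) = 1 := by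
  rw [Emul]
  have h := two_smul_four g X
  have : (2:ℕ) • (X + X) = (4:ℕ) • X := by abel
  rw [this, h, add_zero]

/-- the unit `1 + 2X` -/
def E (g : ℕ) (X : M4 g) : GL (Fin (2*g)) (ZMod 4) :=
  ⟨1 + (2:ℕ) • X, 1 + (2:ℕ) • X, Einv g X, Einv g X⟩

lemma E_val (g : ℕ) (X : M4 g) : (E g X : M4 g) = 1 + (2:ℕ) • X := rfl

lemma E_add (g : ℕ) (X Y : M4 g) : E g (X + Y) = E g X * E g Y := by
  apply Units.ext
  rw [Units.val_mul, E_val, E_val, E_val, Emul]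

lemma E_conj (g : ℕ) (h : GL (Fin (2*g)) (ZMod 4)) (X : M4 g) :
    E g ((h : M4 g) * X * ((h⁻¹ : GL (Fin (2*g)) (ZMod 4)) : M4 g)) = h * E g X * h⁻¹ := by
  apply Units.ext
  rw [Units.val_mul, Units.val_mul, E_val, E_val, mul_add, add_mul, mul_one, Units.mul_inv]
  rw [Matrix.mul_smul, Matrix.smul_mul]

lemma E_inv (g : ℕ) (X : M4 g) : (E g X)⁻¹ = E g X := by
  apply inv_eq_of_mul_eq_one_left
  apply Units.ext
  exact Einv g X

lemma z4_two (a b : ZMod 4) (h : ZMod.castHom (show (2:ℕ) ∣ 4 by norm_num) (ZMod 2) a =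
    ZMod.castHom (show (2:ℕ) ∣ 4 by norm_num) (ZMod 2) b) : 2 • a = 2 • b := by
  revert a b; decide

lemma z4_two' (a b : ZMod 4) (h : 2 • a = 2 • b) :
   ZMod.castHom (show (2:ℕ) ∣ 4 by norm_num) (ZMod 2) a =
    ZMod.castHom (show (2:ℕ) ∣ 4 by norm_num) (ZMod 2) b := by
  revert a b; decide

lemma z4_half (a : ZMod 4) (h : ZMod.castHom (show (2:ℕ) ∣ 4 by norm_num) (ZMod 2) a = 0) :
   ∃ b : ZMod 4, a = 2 • b := by
  revert a; decide

lemma z4_surj (a : ZMod 2) : ∃ b : ZMod 4,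
    ZMod.castHom (show (2:ℕ) ∣ 4 by norm_num) (ZMod 2) b = a := by
  revert a; decide

lemma rd_apply (g : ℕ) (X : M4 g) (i j) :
    rd g X i j = ZMod.castHom (show (2:ℕ) ∣ 4 by norm_num) (ZMod 2) (X i j) := rfl

lemma E_congr (g : ℕ) (X Y : M4 g) (h : rd g X = rd g Y) : E g X = E g Y := by
  apply Units.ext
  rw [E_val, E_val]
  congr 1
  ext i j
  exact z4_two _ _ (congrFun (congrFun h i) j)

lemma rd_surj (g : ℕ) (Y : M2 g) : ∃ X, rd g X = Y := by
  choose f hf using z4_surj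
  exact ⟨Y.map f, by ext i j; exact hf _⟩

lemma rd_two (g : ℕ) (X : M4 g) : rd g ((2:ℕ) • X) = 0 := by
  ext i j
  rw [rd_apply, Matrix.smul_apply, Matrix.zero_apply]
  generalize X i j = a
  revert a; decide

lemma red_E (g : ℕ) (X : M4 g) : red42 g (E g X) = 1 := by
  apply Units.ext
  rw [red42_val, E_val, map_add, rd_two, map_one]; simp

lemma exists_E (g : ℕ) (x : GL (Fin (2*g)) (ZMod 4)) (h : red42 g x = 1) :
    ∃ X, x = E g X := by
  have h1 : rd g ((x : M4 g) - 1) = 0 := by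
    rw [map_sub, ← red42_val, h]; simp
  have h2 : ∀ i j, ∃ b : ZMod 4, ((x : M4 g) - 1) i j = 2 • b := fun i j =>
    z4_half _ (congrFun (congrFun h1 i) j)
  choose f hf using h2
  refine ⟨Matrix.of f, Units.ext ?_⟩
  rw [E_val, ← sub_eq_iff_eq_add']
  ext i j
  rw [hf]; rfl

/-- `Ω² = -1`. -/
lemma Om_row (g : ℕ) (R : Type) [CommRing R] (i : Fin (2*g)) : ∃ i' : Fin (2*g), ∃ c : R,
    c * c = 1 ∧ (∀ j, OmegaMat g R i j = if j = i' then c else 0) ∧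
      (∀ j, OmegaMat g R i' j = if j = i then -c else 0) := by
  rcases Nat.mod_two_eq_zero_or_one i with h | h
  · refine ⟨⟨i+1, by omega⟩, 1, by ring, fun j => ?_, fun j => ?_⟩
    · simp only [OmegaMat, Matrix.of_apply, Fin.ext_iff]
      split_ifs <;> first | rfl | omega
    · simp only [OmegaMat, Matrix.of_apply, Fin.ext_iff]
      split_ifs <;> first | rfl | omega
  · refine ⟨⟨i-1, by omega⟩, -1, by ring, fun j => ?_, fun j => ?_⟩
    · simp only [OmegaMat, Matrix.of_apply, Fin.ext_iff]
      split_ifs <;> first | rfl | omega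
    · simp only [OmegaMat, Matrix.of_apply, Fin.ext_iff]
      split_ifs <;> first | rfl | omega | simp

lemma Om_sq (g : ℕ) (R : Type) [CommRing R] : OmegaMat g R * OmegaMat g R = -1 := by
  ext i j
  obtain ⟨i', c, hc, h1, h2⟩ := Om_row g R i
  rw [Matrix.mul_apply, Matrix.neg_apply, Matrix.one_apply]
  simp only [h1, ite_mul, zero_mul, Finset.sum_ite_eq', Finset.sum_ite_eq, Finset.mem_univ, if_true, h2]
  by_cases h : i = j
  · subst h; simp [hc]
  · simp [h, Ne.symm h]

lemma Om_tr (g : ℕ) (R : Type) [CommRing R] : (OmegaMat g R)ᵀ = - OmegaMat g R := by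
  ext i j
  simp only [OmegaMat, Matrix.transpose_apply, Matrix.of_apply, Matrix.neg_apply]
  split_ifs <;> first | omega | simp

lemma rd_Om (g : ℕ) : rd g (OmegaMat g (ZMod 4)) = OmegaMat g (ZMod 2) := by
  ext i j
  rw [rd_apply]
  simp only [OmegaMat, Matrix.of_apply]
  split_ifs <;> simp

lemma neg2 {m n : Type*} (X : Matrix m n (ZMod 2)) : -X = X := by
  ext i j
  rw [Matrix.neg_apply]; generalize X i j = a; revert a; decide

lemma add2 {m n : Type*} (X : Matrix m n (ZMod 2)) : X + X = 0 := by
  nth_rewrite 1 [← neg2 X]; simp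

/-- Counting. -/
lemma sum_lt (N a : ℕ) (h : a ≤ N) :
    (∑ k : Fin N, if (k : ℕ) < a then (1 : ZMod 2) else 0) = a := by
  rw [Fin.sum_univ_eq_sum_range (fun k => if k < a then (1 : ZMod 2) else 0) N]
  rw [← Finset.sum_filter]
  have : Finset.filter (fun k => k < a) (Finset.range N) = Finset.range a := by
    ext k; simp; omega
  rw [this]; simp

lemma sum_eq (N a : ℕ) (h : a < N) (f : ℕ → ZMod 2) :
    (∑ k : Fin N, if (k : ℕ) = a then f k else 0) = f a := by
  rw [Finset.sum_eq_single (⟨a, h⟩ : Fin N)]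
  · simp
  · intro b _ hb
    rw [if_neg]; intro h; exact hb (Fin.ext h)
  · simp

/-- indicator -/
def I (a k : ℕ) : ZMod 2 := if k < a then 1 else 0
def J (a k : ℕ) : ZMod 2 := if k = a then 1 else 0

lemma sII (N a b : ℕ) (ha : a ≤ N) : ∑ k : Fin N, I a k * I b k = (min a b : ℕ) := by
  rw [← sum_lt N (min a b) (by omega)]
  apply Finset.sum_congr rfl
  intro k _
  simp only [I]
  split_ifs <;> first | omega | simp

lemma sIJ (N a b : ℕ) (hb : b < N) : ∑ k : Fin N, I a k * J b k = I a b := by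
  rw [← sum_eq N b hb (I a)]
  apply Finset.sum_congr rfl
  intro k _
  simp only [J]
  split_ifs <;> first | omega | simp

lemma sJJ (N a b : ℕ) (hb : b < N) : ∑ k : Fin N, J a k * J b k = J a b := by
  rw [← sum_eq N b hb (J a)]
  apply Finset.sum_congr rfl
  intro k _
  simp only [J]
  split_ifs <;> first | omega | simp

lemma Psi_apply (g : ℕ) (k j) : PsiMat g k j =
    if (j : ℕ) % 2 = 0 then I (j+2) k else I j k + J (j+1) k := by
  simp only [PsiMat, Matrix.of_apply, I, J]
  split_ifs <;> first | rfl | omega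

lemma Psi_form (g : ℕ) : (PsiMat g)ᵀ * PsiMat g = OmegaMat g (ZMod 2) := by
  ext i j
  rw [Matrix.mul_apply]
  simp only [Matrix.transpose_apply, Psi_apply]
  have hi := i.2
  have hj := j.2
  have key : ∀ n : ℕ, (n : ZMod 2) = if n % 2 = 0 then 0 else 1 := by
    intro n
    rcases Nat.mod_two_eq_zero_or_one n with h | h
    · rw [if_pos h]; exact (ZMod.natCast_eq_zero_iff n 2).2 (Nat.dvd_of_mod_eq_zero h)
    · rw [if_neg (by omega)]
      have := (ZMod.natCast_mod n 2)
      rw [h] at this; simpa using this.symm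
  have h11 : (1 : ZMod 2) + 1 = 0 := by decide
  have hm : (-1 : ZMod 2) = 1 := by decide
  by_cases h1 : (i : ℕ) % 2 = 0 <;> by_cases h2 : (j : ℕ) % 2 = 0
  · simp only [h1, h2, if_true]
    rw [sII _ _ _ (by omega), key]
    simp only [OmegaMat, Matrix.of_apply]
    split_ifs <;> first | omega | rfl
  · simp only [h1, h2, if_true, if_false, mul_add, Finset.sum_add_distrib]
    rw [sII _ _ _ (by omega), sIJ _ _ _ (by omega), key]
    simp only [OmegaMat, Matrix.of_apply, I]
    split_ifs <;> first | omega | simp [h11, hm]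
  · simp only [h1, h2, if_true, if_false, add_mul, Finset.sum_add_distrib, mul_comm (J _ _) (I _ _)]
    rw [sII _ _ _ (by omega), sIJ _ _ _ (by omega), key]
    simp only [OmegaMat, Matrix.of_apply, I]
    split_ifs <;> first | omega | simp [h11, hm]
  · simp only [h1, h2, if_false, add_mul, mul_add, Finset.sum_add_distrib, mul_comm (J _ _) (I _ _)]
    rw [sII _ _ _ (by omega), sIJ _ _ _ (by omega), sIJ _ _ _ (by omega), sJJ _ _ _ (by omega), key]
    simp only [OmegaMat, Matrix.of_apply, I, J]
    split_ifs <;> first | omega | simp [h11, hm]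

/-- standard vectors of `V` -/
def ev (g : ℕ) (a : ℕ) : Fin (2*g+2) → ZMod 2 := fun k => J a k

lemma ev_add_self (g a : ℕ) : ev g a + ev g a = 0 := by
  ext k
  simp only [Pi.add_apply, Pi.zero_apply]
  generalize ev g a k = x; revert x; decide

lemma exists_adj (g k : ℕ) (hk : k < 2*g) :
    ∃ a : Fin (2*g) → ZMod 2, PsiMat g *ᵥ a = ev g k + ev g (k+1) := by
  have h11 : (1 : ZMod 2) + 1 = 0 := by decide
  by_cases h0 : k = 0
  · refine ⟨Pi.single ⟨k, hk⟩ 1, ?_⟩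
    rw [Matrix.mulVec_single_one]
    ext l
    simp only [Matrix.col_apply, Psi_apply, ev, I, J, Pi.add_apply]
    split_ifs <;> first | omega | simp
  by_cases h1 : k % 2 = 1
  · refine ⟨Pi.single ⟨k-1, by omega⟩ 1 + Pi.single ⟨k, hk⟩ 1, ?_⟩
    rw [Matrix.mulVec_add, Matrix.mulVec_single_one, Matrix.mulVec_single_one]
    ext l
    simp only [Matrix.col_apply, Psi_apply, ev, I, J, Pi.add_apply]
    split_ifs <;> first | omega | simp [h11]
  · refine ⟨Pi.single ⟨k-2, by omega⟩ 1 + Pi.single ⟨k, hk⟩ 1, ?_⟩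
    rw [Matrix.mulVec_add, Matrix.mulVec_single_one, Matrix.mulVec_single_one]
    ext l
    simp only [Matrix.col_apply, Psi_apply, ev, I, J, Pi.add_apply]
    split_ifs <;> first | omega | simp [h11]

lemma exists_u (g k : ℕ) (hk : k < 2*g+1) :
    ∃ a : Fin (2*g) → ZMod 2, PsiMat g *ᵥ a = ev g 0 + ev g k := by
  induction k with
  | zero => exact ⟨0, by rw [ev_add_self]; simp⟩
  | succ k ih =>
    obtain ⟨a, ha⟩ := ih (by omega)
    obtain ⟨b, hb⟩ := exists_adj g k (by omega)
    refine ⟨a + b, ?_⟩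
    rw [Matrix.mulVec_add, ha, hb, add_assoc, ← add_assoc (ev g k), ev_add_self, zero_add]

/-- Transvection part `v vᵀ Ω`. -/
def T (g : ℕ) (x y : Fin (2*g) → ZMod 2) : M2 g := vecMulVec x y * OmegaMat g (ZMod 2)

/-- symplectic form -/
def om (g : ℕ) (x y : Fin (2*g) → ZMod 2) : ZMod 2 := x ⬝ᵥ (OmegaMat g (ZMod 2) *ᵥ y)

lemma om_psi (g : ℕ) (x y : Fin (2*g) → ZMod 2) :
    om g x y = (PsiMat g *ᵥ x) ⬝ᵥ (PsiMat g *ᵥ y) := by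
  rw [om, ← Psi_form, ← Matrix.mulVec_mulVec, Matrix.dotProduct_mulVec, Matrix.vecMul_transpose]

lemma ev_dot (g a b : ℕ) (hb : b < 2*g+2) : ev g a ⬝ᵥ ev g b = J a b := by
  unfold dotProduct ev
  exact sJJ _ a b hb

lemma T_mul (g : ℕ) (a b x y : Fin (2*g) → ZMod 2) :
    T g a b * T g x y = om g b x • T g a y := by
  unfold T om
  rw [Matrix.mul_assoc, ← Matrix.mul_assoc (OmegaMat g (ZMod 2)), Matrix.mul_vecMulVec,
    ← Matrix.mul_assoc, Matrix.vecMulVec_mul_vecMulVec, ← Matrix.smul_mul]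
  congr 1
  ext i j
  simp [vecMulVec_apply]
  ring

lemma om_self (g a b : ℕ) (ha : a < 2*g+2) (hb : b < 2*g+2) (w : Fin (2*g) → ZMod 2)
    (hw : PsiMat g *ᵥ w = ev g a + ev g b) : om g w w = 0 := by
  rw [om_psi, hw]
  simp only [add_dotProduct, dotProduct_add, ev_dot _ _ _ ha, ev_dot _ _ _ hb]
  simp only [J]
  split_ifs <;> first | omega | decide

/-- unit `1 + w wᵀ Ω` -/
lemma tv_inv (g : ℕ) (w : Fin (2*g) → ZMod 2) (h : om g w w = 0) :
    (1 + T g w w) * (1 + T g w w) = 1 := by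
  have := add2 (T g w w)
  rw [mul_add, mul_one, add_mul, one_mul, T_mul, h, zero_smul, add_zero, add_assoc, this, add_zero]

def tv (g : ℕ) (w : Fin (2*g) → ZMod 2) (h : om g w w = 0) : GL (Fin (2*g)) (ZMod 2) :=
  ⟨1 + T g w w, 1 + T g w w, tv_inv g w h, tv_inv g w h⟩

lemma permMat_swap (g : ℕ) (a b : Fin (2*g+2)) :
    permMat g (Equiv.swap a b) =
      1 + vecMulVec (ev g a + ev g b) (ev g a + ev g b) := by
  have h11 : (1 : ZMod 2) + 1 = 0 := by decide
  ext k j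
  simp only [permMat, Matrix.of_apply, Matrix.add_apply, Matrix.one_apply, vecMulVec_apply, ev, J,
    Pi.add_apply, Equiv.swap_apply_def, Fin.ext_iff]
  split_ifs <;> first | omega | decide

lemma represents (g : ℕ) (a b : Fin (2*g+2)) (w : Fin (2*g) → ZMod 2)
    (hw : PsiMat g *ᵥ w = ev g a + ev g b) :
    representsPerm g (1 + T g w w) (Equiv.swap a b) := by
  have h : PsiMat g * (1 + T g w w) - permMat g (Equiv.swap a b) * PsiMat g = 0 := by
    rw [permMat_swap, ← hw, T, ← Psi_form, Matrix.mul_add, Matrix.add_mul, Matrix.mul_one, Matrix.one_mul, ← Matrix.mul_assoc,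
      Matrix.mul_vecMulVec, ← Matrix.mul_assoc, Matrix.vecMulVec_mul _ w, Matrix.vecMul_transpose, sub_self]
  intro j
  rw [h]
  exact (tline g).zero_mem

end MM
namespace MM

/-- residues `Y` of matrices `X` with `1+2X ∈ H` -/
def AA (g : ℕ) (H : Subgroup (GL (Fin (2*g)) (ZMod 4))) : AddSubgroup (M2 g) where
  carrier := {Y | ∀ X, rd g X = Y → E g X ∈ H}
  zero_mem' := by
    intro X hX
    have : E g X = 1 := by
      rw [E_congr g X 0 (by rw [hX, map_zero])]
      apply Units.ext; rw [E_val]; simp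
    rw [this]; exact H.one_mem
  add_mem' := by
    intro a b ha hb X hX
    obtain ⟨X1, h1⟩ := rd_surj g a
    obtain ⟨X2, h2⟩ := rd_surj g b
    rw [E_congr g X (X1 + X2) (by rw [hX, map_add, h1, h2]), E_add]
    exact H.mul_mem (ha X1 h1) (hb X2 h2)
  neg_mem' := by
    intro a ha
    rw [neg2]; exact ha

lemma AA_of (g : ℕ) (H : Subgroup (GL (Fin (2*g)) (ZMod 4))) (X : M4 g) (h : E g X ∈ H) :
    rd g X ∈ AA g H := by
  intro X' h'
  rw [E_congr g X' X h']; exact h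

lemma conj_comm {K : Type*} [Group K] (G : Subgroup K) (h c : K) (hh : h ∈ G) (hc : c ∈ ⁅G, G⁆) :
    h * c * h⁻¹ ∈ ⁅G, G⁆ := by
  have hcG : c ∈ G := by
    have : ⁅G, G⁆ ≤ G := by
      rw [Subgroup.commutator_le]
      intro a ha b hb
      rw [commutatorElement_def]
      exact G.mul_mem (G.mul_mem (G.mul_mem ha hb) (G.inv_mem ha)) (G.inv_mem hb)
    exact this hc
  have h1 := mul_mem (Subgroup.commutator_mem_commutator hh hcG) hc
  rw [commutatorElement_def] at h1
  simpa using h1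

lemma red_inv_val (g : ℕ) (x : GL (Fin (2*g)) (ZMod 4)) :
    rd g ((x⁻¹ : GL (Fin (2*g)) (ZMod 4)) : M4 g) =
      (((red42 g x)⁻¹ : GL (Fin (2*g)) (ZMod 2)) : M2 g) := by
  rw [← map_inv, red42_val]

lemma AA_conj (g : ℕ) (G : Subgroup (GL (Fin (2*g)) (ZMod 4))) (s : GL (Fin (2*g)) (ZMod 2))
    (hs : s ∈ Subgroup.map (red42 g) G) (Y : M2 g) (hY : Y ∈ AA g ⁅G, G⁆) :
    (s : M2 g) * Y * ((s⁻¹ : GL (Fin (2*g)) (ZMod 2)) : M2 g) ∈ AA g ⁅G, G⁆ := by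
  obtain ⟨h, hh, rfl⟩ := hs
  obtain ⟨X, rfl⟩ := rd_surj g Y
  rw [← red_inv_val, red42_val, ← map_mul, ← map_mul]
  apply AA_of
  rw [E_conj]
  exact conj_comm G h _ hh (hY X rfl)

lemma AA_comm (g : ℕ) (G : Subgroup (GL (Fin (2*g)) (ZMod 4))) (s : GL (Fin (2*g)) (ZMod 2))
    (hs : s ∈ Subgroup.map (red42 g) G) (X : M4 g) (hX : E g X ∈ G) :
    (s : M2 g) * rd g X * ((s⁻¹ : GL (Fin (2*g)) (ZMod 2)) : M2 g) + rd g X ∈ AA g ⁅G, G⁆ := by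
  obtain ⟨h, hh, rfl⟩ := hs
  rw [← red_inv_val, red42_val, ← map_mul, ← map_mul, ← map_add]
  apply AA_of
  rw [E_add, E_conj]
  nth_rewrite 2 [← E_inv]
  exact Subgroup.commutator_mem_commutator hh hX

lemma T_add_left (g : ℕ) (x y z) : T g (x + y) z = T g x z + T g y z := by
  unfold T; rw [Matrix.add_vecMulVec, Matrix.add_mul]

lemma T_add_right (g : ℕ) (x y z) : T g z (x + y) = T g z x + T g z y := by
  unfold T; rw [Matrix.vecMulVec_add, Matrix.add_mul]

lemma T_smul_left (g : ℕ) (c : ZMod 2) (x z) : T g (c • x) z = c • T g x z := by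
  unfold T; rw [Matrix.smul_vecMulVec, Matrix.smul_mul]

lemma T_smul_right (g : ℕ) (c : ZMod 2) (x z) : T g z (c • x) = c • T g z x := by
  unfold T; rw [Matrix.vecMulVec_smul, Matrix.smul_mul]

lemma T_conj (g : ℕ) (v w : Fin (2*g) → ZMod 2) (h1 : om g v w = 1) (h2 : om g w v = 1) :
    (1 + T g w w) * T g v v * (1 + T g w w) = T g (v + w) (v + w) := by
  rw [add_mul, one_mul, T_mul, h2, one_smul, mul_add, mul_one, add_mul, T_mul, T_mul, h1, one_smul,
    one_smul, T_add_left, T_add_right, T_add_right]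
  abel

lemma smul_mem2 {g : ℕ} (A : AddSubgroup (M2 g)) (c : ZMod 2) {Y : M2 g} (h : Y ∈ A) :
    c • Y ∈ A := by
  have : c = 0 ∨ c = 1 := by revert c; decide
  rcases this with rfl | rfl
  · rw [zero_smul]; exact A.zero_mem
  · rw [one_smul]; exact h

/-- Linear algebra: from a spanning family to all of `sp`. -/
lemma span_sp (g : ℕ) {ι : Type*} [Fintype ι] [DecidableEq ι] (A : AddSubgroup (M2 g))
    (u : ι → Fin (2*g) → ZMod 2)
    (hu : Submodule.span (ZMod 2) (Set.range u) = ⊤)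
    (h1 : ∀ i, T g (u i) (u i) ∈ A) (h2 : ∀ i j, i ≠ j → T g (u i + u j) (u i + u j) ∈ A)
    (Y : M2 g) (hY : Yᵀ * OmegaMat g (ZMod 2) + OmegaMat g (ZMod 2) * Y = 0) : Y ∈ A := by
  have b0 : ∀ i j, T g (u i) (u j) + T g (u j) (u i) ∈ A := by
    intro i j
    by_cases hij : i = j
    · subst hij; rw [add2]; exact A.zero_mem
    · have := A.sub_mem (A.sub_mem (h2 i j hij) (h1 i)) (h1 j)
      rw [T_add_left, T_add_right, T_add_right] at this
      convert this using 1
      abel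
  have hm : ∀ x, x ∈ Submodule.span (ZMod 2) (Set.range u) := by intro x; rw [hu]; trivial
  have b1 : ∀ x j, T g x (u j) + T g (u j) x ∈ A := by
    intro x j
    induction hm x using Submodule.span_induction with
    | mem x hx => obtain ⟨i, rfl⟩ := hx; exact b0 i j
    | zero => simp [T]
    | add x y _ _ hx hy =>
      rw [T_add_left, T_add_right]
      convert A.add_mem hx hy using 1; abel
    | smul c x _ hx =>
      rw [T_smul_left, T_smul_right, ← smul_add]
      exact smul_mem2 A c hx
  have b2 : ∀ x y, T g x y + T g y x ∈ A := by
    intro x y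
    induction hm y using Submodule.span_induction with
    | mem y hy => obtain ⟨i, rfl⟩ := hy; exact b1 x i
    | zero => simp [T]
    | add y z _ _ hx hy =>
      rw [T_add_left, T_add_right]
      convert A.add_mem hx hy using 1; abel
    | smul c x _ hx =>
      rw [T_smul_left, T_smul_right, ← smul_add]
      exact smul_mem2 A c hx
  have b3 : ∀ x, T g x x ∈ A := by
    intro x
    induction hm x using Submodule.span_induction with
    | mem x hx => obtain ⟨i, rfl⟩ := hx; exact h1 i
    | zero => simp [T]
    | add x y _ _ hx hy =>
      rw [T_add_left, T_add_right, T_add_right]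
      convert A.add_mem (A.add_mem hx hy) (b2 x y) using 1; abel
    | smul c x _ hx =>
      rw [T_smul_left, T_smul_right]
      exact smul_mem2 A c (smul_mem2 A c hx)
  have hO : OmegaMat g (ZMod 2) * OmegaMat g (ZMod 2) = 1 := by rw [Om_sq, neg2]
  have hOt : (OmegaMat g (ZMod 2))ᵀ = OmegaMat g (ZMod 2) := by rw [Om_tr, neg2]
  have hsingle : ∀ (i j : Fin (2*g)) (c : ZMod 2), Matrix.single i j c =
      c • vecMulVec (Pi.single i 1) (Pi.single j 1) := by
    intro i j c
    rw [← Matrix.single_eq_single_vecMulVec_single, Matrix.smul_single]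
    simp
  have c1 : ∀ L : M2 g, (L + Lᵀ) * OmegaMat g (ZMod 2) ∈ A := by
    intro L
    induction L using Matrix.induction_on' with
    | h_zero => simp
    | h_add p q hp hq =>
      rw [Matrix.transpose_add]
      convert A.add_mem hp hq using 1
      rw [← Matrix.add_mul]; congr 1; abel
    | h_std_basis i j c =>
      rw [Matrix.transpose_single, hsingle, hsingle, ← smul_add, Matrix.smul_mul, Matrix.add_mul]
      exact smul_mem2 A c (b2 _ _)
  have c2 : ∀ d : Fin (2*g) → ZMod 2, Matrix.diagonal d * OmegaMat g (ZMod 2) ∈ A := by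
    intro d
    have : Matrix.diagonal d = ∑ i, Matrix.single i i (d i) := by
      ext a b
      rw [Matrix.sum_apply, Matrix.diagonal_apply]
      simp only [Matrix.single_apply]
      by_cases hab : a = b
      · subst hab; simp
      · rw [if_neg hab, Finset.sum_eq_zero]
        intro i _
        rw [if_neg]; rintro ⟨rfl, rfl⟩; exact hab rfl
    rw [this, Matrix.sum_mul]
    apply A.sum_mem
    intro i _
    rw [hsingle, Matrix.smul_mul]
    exact smul_mem2 A _ (b3 _)
  set M := Y * OmegaMat g (ZMod 2) with hM
  have hYM : Y = M * OmegaMat g (ZMod 2) := by rw [hM, Matrix.mul_assoc, hO, Matrix.mul_one]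
  have hsym : Mᵀ = M := by
    have e : Yᵀ * OmegaMat g (ZMod 2) = OmegaMat g (ZMod 2) * Y := by
      rw [← neg2 (OmegaMat g (ZMod 2) * Y)]; exact eq_neg_of_add_eq_zero_left hY
    rw [hM, Matrix.transpose_mul, hOt]
    calc OmegaMat g (ZMod 2) * Yᵀ
        = OmegaMat g (ZMod 2) * (Yᵀ * OmegaMat g (ZMod 2)) * OmegaMat g (ZMod 2) := by
          rw [Matrix.mul_assoc, Matrix.mul_assoc, hO, Matrix.mul_one]
      _ = Y * OmegaMat g (ZMod 2) := by
          rw [e, ← Matrix.mul_assoc, hO, Matrix.one_mul]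
  have hdec : M = (Matrix.of fun i j => if i < j then M i j else 0) +
      (Matrix.of fun i j => if i < j then M i j else 0)ᵀ + Matrix.diagonal (fun i => M i i) := by
    ext i j
    have hs : M j i = M i j := congrFun (congrFun hsym i) j
    simp only [Matrix.add_apply, Matrix.of_apply, Matrix.transpose_apply, Matrix.diagonal_apply]
    rcases lt_trichotomy i j with h | h | h
    · simp [h, h.ne, h.not_gt]
    · subst h; simp
    · simp [h, h.ne', h.not_gt, hs]
  rw [hYM, hdec, Matrix.add_mul]
  exact A.add_mem (c1 _) (c2 _)

end MM
namespace MM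

/-- the similitude `diag(0,1,0,1,…)` -/
def DD (g : ℕ) (R : Type) [CommRing R] : Matrix (Fin (2*g)) (Fin (2*g)) R :=
  Matrix.diagonal fun i => if (i : ℕ) % 2 = 1 then 1 else 0

lemma rd_DD (g : ℕ) : rd g (DD g (ZMod 4)) = DD g (ZMod 2) := by
  ext i j
  rw [rd_apply]
  simp only [DD, Matrix.diagonal_apply]
  split_ifs <;> simp

lemma E_DD (g : ℕ) : E g (DD g (ZMod 4)) ∈ GSpSet g (ZMod 4) := by
  refine ⟨-1, ?_⟩
  have h : (E g (DD g (ZMod 4)) : M4 g) =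
      Matrix.diagonal fun i : Fin (2*g) => if (i : ℕ) % 2 = 1 then -1 else 1 := by
    rw [E_val]
    ext i j
    simp only [DD, Matrix.add_apply, Matrix.smul_apply, Matrix.one_apply, Matrix.diagonal_apply]
    split_ifs <;> decide
  rw [h, Matrix.diagonal_transpose]
  ext i j
  rw [Matrix.mul_diagonal, Matrix.diagonal_mul]
  simp only [OmegaMat, Matrix.of_apply, Matrix.smul_apply]
  split_ifs <;> first | omega | decide

lemma T0 (g : ℕ) (hg : 0 < 2*g) (v : Fin (2*g) → ZMod 2) (hv : v = Pi.single ⟨0, hg⟩ 1) :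
    DD g (ZMod 2) * T g v v = 0 ∧ T g v v * DD g (ZMod 2) = T g v v := by
  have hT : ∀ i j, T g v v i j = if (i : ℕ) = 0 ∧ (j : ℕ) = 1 then 1 else 0 := by
    intro i j
    rw [T, Matrix.vecMulVec_mul, vecMulVec_apply, hv, Matrix.single_one_vecMul]
    simp only [Pi.single_apply, OmegaMat, Matrix.of_apply, Matrix.row_apply, Fin.ext_iff]
    split_ifs <;> first | omega | simp_all
  constructor
  · ext i j
    rw [DD, Matrix.diagonal_mul, hT]
    split_ifs <;> first | omega | simp
  · ext i j
    rw [DD, Matrix.mul_diagonal, hT]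
    split_ifs <;> first | omega | simp

lemma Psi_mulVec_sum (g : ℕ) (x : Fin (2*g) → ZMod 2) : ∑ k, (PsiMat g *ᵥ x) k = 0 := by
  have h : ∀ j, ∑ k, PsiMat g k j = 0 := by
    intro j
    have hj := j.2
    simp only [Psi_apply]
    by_cases h1 : (j : ℕ) % 2 = 0
    · simp only [h1, if_true]
      unfold I
      rw [sum_lt _ _ (by omega), ZMod.natCast_eq_zero_iff]
      omega
    · simp only [h1, if_false, Finset.sum_add_distrib]
      unfold I J
      rw [sum_lt _ _ (by omega), sum_eq _ _ (by omega) (fun _ => 1), ← Nat.cast_succ,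
        ZMod.natCast_eq_zero_iff]
      omega
  simp only [Matrix.mulVec, dotProduct]
  rw [Finset.sum_comm]
  simp only [← Finset.sum_mul, h, zero_mul, Finset.sum_const_zero]

lemma Psi_inj (g : ℕ) (x y : Fin (2*g) → ZMod 2) (h : PsiMat g *ᵥ x = PsiMat g *ᵥ y) : x = y := by
  have h1 : OmegaMat g (ZMod 2) *ᵥ x = OmegaMat g (ZMod 2) *ᵥ y := by
    rw [← Psi_form, ← Matrix.mulVec_mulVec, h, Matrix.mulVec_mulVec]
  have h2 := congrArg (fun z => OmegaMat g (ZMod 2) *ᵥ z) h1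
  simpa [Matrix.mulVec_mulVec, Om_sq, neg2] using h2

lemma Psi_last (g : ℕ) (x : Fin (2*g) → ZMod 2) : (PsiMat g *ᵥ x) (Fin.last (2*g+1)) = 0 := by
  simp only [Matrix.mulVec, dotProduct]
  apply Finset.sum_eq_zero
  intro j _
  have hj := j.2
  have : PsiMat g (Fin.last (2*g+1)) j = 0 := by
    simp only [PsiMat, Matrix.of_apply, Fin.val_last]
    split_ifs <;> first | omega | rfl
  rw [this, zero_mul]

lemma u_span (g : ℕ) (u : Fin (2*g+1) → Fin (2*g) → ZMod 2)
    (hu : ∀ k, PsiMat g *ᵥ u k = ev g 0 + ev g k) :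
    Submodule.span (ZMod 2) (Set.range u) = ⊤ := by
  rw [eq_top_iff]
  intro x _
  have hx : x = ∑ k : Fin (2*g+1), (PsiMat g *ᵥ x) k.castSucc • u k := by
    apply Psi_inj
    rw [Matrix.mulVec_sum]
    simp only [Matrix.mulVec_smul, hu, smul_add, Finset.sum_add_distrib]
    rw [← Finset.sum_smul]
    have h0 := Psi_mulVec_sum g x
    rw [Fin.sum_univ_castSucc, Psi_last, add_zero] at h0
    rw [h0, zero_smul, zero_add]
    ext l
    rw [Finset.sum_apply]
    simp only [Pi.smul_apply, ev, J, smul_eq_mul, mul_ite, mul_one, mul_zero]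
    refine Fin.lastCases ?_ (fun l => ?_) l
    · rw [Psi_last, Finset.sum_eq_zero]
      intro k _
      rw [if_neg]
      have := k.2
      simp only [Fin.val_last]
      omega
    · rw [Finset.sum_eq_single l]
      · simp
      · intro b _ hb
        rw [if_neg]
        intro h
        exact hb (Fin.ext (by simpa using h.symm))
      · simp
  rw [hx]
  apply Submodule.sum_mem
  intro k _
  exact Submodule.smul_mem _ _ (Submodule.subset_span ⟨k, rfl⟩)

end MM

/-- Let `g ≥ 2` and let `G ⊆ GSp_{2g}(ℤ/4ℤ)` be a subgroup containing the kernel of the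
reduction `GSp_{2g}(ℤ/4ℤ) → GSp_{2g}(ℤ/2ℤ)`, whose image in `Sp_{2g}(ℤ/2ℤ)` contains the
embedded copy of `S_{2g+1}` (the permutations in `S_{2g+2}` fixing the last coordinate,
acting on `W = t^⊥/span(t)`). Then the commutator subgroup `[G,G]` contains the kernel of
the reduction `Sp_{2g}(ℤ/4ℤ) → Sp_{2g}(ℤ/2ℤ)`. -/
theorem maximal_monodromy_stmt10 (g : ℕ) (hg : 2 ≤ g)
    (G : Subgroup (GL (Fin (2*g)) (ZMod 4)))
    (hGSp : (G : Set (GL (Fin (2*g)) (ZMod 4))) ⊆ GSpSet g (ZMod 4))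
    (hker : ∀ x : GL (Fin (2*g)) (ZMod 4),
      x ∈ GSpSet g (ZMod 4) → red42 g x = 1 → x ∈ G)
    (hS : ∀ B : GL (Fin (2*g)) (ZMod 2),
      (∃ σ : Equiv.Perm (Fin (2*g+2)),
        σ ⟨2*g+1, by omega⟩ = (⟨2*g+1, by omega⟩ : Fin (2*g+2)) ∧
        representsPerm g (B : Matrix (Fin (2*g)) (Fin (2*g)) (ZMod 2)) σ) →
      B ∈ Subgroup.map (red42 g) G) :
    ∀ x : GL (Fin (2*g)) (ZMod 4), x ∈ SpSet g (ZMod 4) → red42 g x = 1 →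
      x ∈ (⁅G, G⁆ : Subgroup (GL (Fin (2*g)) (ZMod 4))) := by
  classical
  have key : ∀ Y : MM.M2 g,
      Yᵀ * OmegaMat g (ZMod 2) + OmegaMat g (ZMod 2) * Y = 0 → Y ∈ MM.AA g ⁅G, G⁆ := by
    choose u0 hu0 using MM.exists_u g
    let u : Fin (2*g+1) → Fin (2*g) → ZMod 2 := fun k => u0 k k.2
    have hu : ∀ k, PsiMat g *ᵥ u k = MM.ev g 0 + MM.ev g k := fun k => hu0 k k.2
    -- transvections in the image of `G`
    have htv : ∀ (a b : ℕ) (_ : a < 2*g+1) (_ : b < 2*g+1) (w : Fin (2*g) → ZMod 2),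
        PsiMat g *ᵥ w = MM.ev g a + MM.ev g b → ∃ s : GL (Fin (2*g)) (ZMod 2),
          s ∈ Subgroup.map (red42 g) G ∧ (s : MM.M2 g) = 1 + MM.T g w w ∧
          ((s⁻¹ : GL (Fin (2*g)) (ZMod 2)) : MM.M2 g) = 1 + MM.T g w w := by
      intro a b ha hb w hw
      have h0 := MM.om_self g a b (by omega) (by omega) w hw
      refine ⟨MM.tv g w h0, hS _ ⟨Equiv.swap ⟨a, by omega⟩ ⟨b, by omega⟩, ?_, ?_⟩, rfl, rfl⟩
      · apply Equiv.swap_apply_of_ne_of_ne <;>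
        · intro h
          have := congrArg Fin.val h
          simp only at this
          omega
      · exact MM.represents g _ _ w hw
    have step : ∀ (a b : ℕ) (_ : a < 2*g+1) (_ : b < 2*g+1) (v w : Fin (2*g) → ZMod 2),
        PsiMat g *ᵥ w = MM.ev g a + MM.ev g b → MM.T g v v ∈ MM.AA g ⁅G, G⁆ →
        MM.om g v w = 1 → MM.T g (v + w) (v + w) ∈ MM.AA g ⁅G, G⁆ := by
      intro a b ha hb v w hw hv h1
      obtain ⟨s, hs, e1, e2⟩ := htv a b ha hb w hw
      have h2 : MM.om g w v = 1 := by
        rw [MM.om_psi] at h1 ⊢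
        rw [dotProduct_comm]; exact h1
      have := MM.AA_conj g G s hs _ hv
      rwa [e1, e2, MM.T_conj g v w h1 h2] at this
    have hom : ∀ i j : Fin (2*g+1), (i : ℕ) ≠ 0 → (j : ℕ) ≠ 0 → i ≠ j →
        MM.om g (u i) (u j) = 1 := by
      intro i j hi hj hij
      have hij' : (i : ℕ) ≠ j := fun h => hij (Fin.ext h)
      rw [MM.om_psi, hu, hu]
      simp only [add_dotProduct, dotProduct_add, MM.ev_dot g _ 0 (by omega),
        MM.ev_dot g _ j (by omega)]
      simp only [MM.J]
      split_ifs <;> first | omega | decide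
    have hself : ∀ i : Fin (2*g+1), MM.om g (u i) (u i) = 0 := fun i =>
      MM.om_self g 0 i (by omega) (by omega) _ (hu i)
    have hadd : ∀ x y z, MM.om g x (y + z) = MM.om g x y + MM.om g x z := by
      intro x y z
      simp only [MM.om, Matrix.mulVec_add, dotProduct_add]
    have hPsum : ∀ i j, PsiMat g *ᵥ (u i + u j) = MM.ev g i + MM.ev g j := by
      intro i j
      rw [Matrix.mulVec_add, hu, hu, add_comm (MM.ev g 0), add_assoc, ← add_assoc (MM.ev g 0),
        MM.ev_add_self, zero_add]
    have hu1v : u ⟨1, by omega⟩ = Pi.single ⟨0, by omega⟩ 1 := by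
      apply MM.Psi_inj
      rw [hu, Matrix.mulVec_single_one]
      ext l
      simp only [Matrix.col_apply, MM.Psi_apply, MM.ev, MM.I, MM.J, Pi.add_apply]
      split_ifs <;> first | omega | simp
    have hT1 : MM.T g (u ⟨1, by omega⟩) (u ⟨1, by omega⟩) ∈ MM.AA g ⁅G, G⁆ := by
      obtain ⟨s, hs, e1, e2⟩ := htv 0 1 (by omega) (by omega) _ (hu ⟨1, by omega⟩)
      have := MM.AA_comm g G s hs (MM.DD g (ZMod 4))
        (hker _ (MM.E_DD g) (MM.red_E g _))
      obtain ⟨d1, d2⟩ := MM.T0 g (by omega) _ hu1v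
      rw [e1, e2, MM.rd_DD, add_mul, one_mul, d2, mul_add, mul_one, add_mul, d1, MM.T_mul, hself,
        zero_smul, zero_add, add_zero, add_right_comm, MM.add2, zero_add] at this
      exact this
    have hu00 : u ⟨0, by omega⟩ = 0 := by
      apply MM.Psi_inj
      rw [hu, MM.ev_add_self]; simp
    have hTi : ∀ i, MM.T g (u i) (u i) ∈ MM.AA g ⁅G, G⁆ := by
      intro i
      by_cases hi0 : (i : ℕ) = 0
      · have : i = ⟨0, by omega⟩ := Fin.ext hi0
        rw [this, hu00]
        simp [MM.T]
      by_cases hi1 : i = ⟨1, by omega⟩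
      · rw [hi1]; exact hT1
      have h := step 1 i (by omega) (by omega) (u ⟨1, by omega⟩) (u ⟨1, by omega⟩ + u i)
        (hPsum _ _) hT1 (by
          rw [hadd, hself, hom _ _ (by simp) hi0 (Ne.symm hi1), zero_add])
      have e : u ⟨1, by omega⟩ + (u ⟨1, by omega⟩ + u i) = u i := by
        ext l
        simp only [Pi.add_apply]
        generalize u ⟨1, by omega⟩ l = a
        generalize u i l = b
        revert a b; decide
      rwa [e] at h
    refine MM.span_sp g _ u (MM.u_span g u hu) hTi ?_
    intro i j hij
    by_cases hi0 : (i : ℕ) = 0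
    · have : i = ⟨0, by omega⟩ := Fin.ext hi0
      rw [this, hu00, zero_add]; exact hTi j
    by_cases hj0 : (j : ℕ) = 0
    · have : j = ⟨0, by omega⟩ := Fin.ext hj0
      rw [this, hu00, add_zero]; exact hTi i
    exact step 0 j (by omega) (by omega) (u i) (u j) (hu j) (hTi i) (hom i j hi0 hj0 hij)
  intro x hx hx1
  obtain ⟨X, rfl⟩ := MM.exists_E g x hx1
  refine key (MM.rd g X) ?_ X rfl
  have h1 : (1 + (2:ℕ) • X)ᵀ * OmegaMat g (ZMod 4) * (1 + (2:ℕ) • X) = OmegaMat g (ZMod 4) := hx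
  have h2 : (2:ℕ) • (Xᵀ * OmegaMat g (ZMod 4) + OmegaMat g (ZMod 4) * X) = (2:ℕ) • (0 : MM.M4 g) := by
    have h4 := MM.two_smul_four g (Xᵀ * OmegaMat g (ZMod 4) * X)
    rw [Matrix.transpose_add, Matrix.transpose_one, Matrix.transpose_smul] at h1
    have h5 : (1 + (2:ℕ) • Xᵀ) * OmegaMat g (ZMod 4) * (1 + (2:ℕ) • X) =
      OmegaMat g (ZMod 4) + (2:ℕ) • (Xᵀ * OmegaMat g (ZMod 4) + OmegaMat g (ZMod 4) * X) +
        (4:ℕ) • (Xᵀ * OmegaMat g (ZMod 4) * X) := by noncomm_ring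
    rw [h5, h4, add_zero] at h1
    simpa using h1
  have h3 : MM.rd g (Xᵀ * OmegaMat g (ZMod 4) + OmegaMat g (ZMod 4) * X) = MM.rd g 0 := by
    ext i j
    exact MM.z4_two' _ _ (congrFun (congrFun h2 i) j)
  rw [map_add, map_mul, map_mul, MM.rd_Om, map_zero] at h3
  exact h3
end

section
/- Let g ∈ {2,3}, and let S̃_{2g+2} ⊆ Sp_{2g}(ℤ_2) denote the full preimage of the embedded copy of S_{2g+2} ⊆ Sp_{2g}(ℤ/2ℤ) under the mod-2 reduction map Sp_{2g}(ℤ_2) → Sp_{2g}(ℤ/2ℤ). If H ⊆ S̃_{2g+2} is a closed subgroup whose mod-2 image equals the full embedded S_{2g+2}, then H = S̃_{2g+2}. -/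
open Matrix

section core
set_option linter.unusedSectionVars false
open Matrix

/-- entrywise reduction mod 2 of matrices -/
noncomputable def rho (I : Type) [Fintype I] [DecidableEq I] :
    Matrix I I ℤ_[2] →+* Matrix I I (ZMod 2) := (PadicInt.toZMod (p := 2)).mapMatrix

variable {I : Type} [Fintype I] [DecidableEq I]

lemma z2_cases (c : ZMod 2) : c = 0 ∨ c = 1 := by
  revert c; decide

lemma neg_eq_self_mat (a : Matrix I I (ZMod 2)) : -a = a := by
  ext i j; simp [ZMod.neg_eq_self_mod_two]

lemma toZMod_two_pow (k : ℕ) : PadicInt.toZMod ((2 : ℤ_[2]) ^ (k+1)) = 0 := by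
  rw [map_pow, map_ofNat]
  have : (OfNat.ofNat 2 : ZMod 2) = 0 := by decide
  rw [this]; simp

lemma rho_smul (c : ℤ_[2]) (A : Matrix I I ℤ_[2]) :
    rho I (c • A) = PadicInt.toZMod c • rho I A := by
  ext i j; simp [rho]

lemma rho_two_smul (k : ℕ) (A : Matrix I I ℤ_[2]) :
    rho I ((2 : ℤ_[2]) ^ (k+1) • A) = 0 := by
  rw [rho_smul, toZMod_two_pow, zero_smul]

lemma rho_two_smul' (A : Matrix I I ℤ_[2]) :
    rho I ((2 : ℤ_[2]) • A) = 0 := by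
  have := rho_two_smul 0 A
  simpa using this

lemma rho_transpose (A : Matrix I I ℤ_[2]) : rho I Aᵀ = (rho I A)ᵀ := by
  ext i j; simp [rho]

lemma exists_half (X : Matrix I I ℤ_[2]) (h : rho I X = 0) :
    ∃ Y : Matrix I I ℤ_[2], X = (2 : ℤ_[2]) • Y := by
  have h1 : ∀ i j, ∃ y : ℤ_[2], X i j = 2 * y := by
    intro i j
    have h2 : PadicInt.toZMod (X i j) = 0 := by
      have := congrFun (congrFun h i) j
      simpa [rho] using this
    have h3 : X i j ∈ RingHom.ker (PadicInt.toZMod (p := 2)) := h2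
    rw [PadicInt.ker_toZMod, PadicInt.maximalIdeal_eq_span_p, Ideal.mem_span_singleton] at h3
    obtain ⟨y, hy⟩ := h3
    exact ⟨y, by simpa using hy⟩
  choose Y hY using h1
  exact ⟨Matrix.of Y, by ext i j; simp [hY i j]⟩

lemma smul_two_cancel (k : ℕ) {A B : Matrix I I ℤ_[2]}
    (h : (2 : ℤ_[2]) ^ k • A = (2 : ℤ_[2]) ^ k • B) : A = B := by
  ext1 i j
  have := congrFun (congrFun h i) j
  simp only [Matrix.smul_apply, smul_eq_mul] at this
  have h2 : (2 : ℤ_[2]) ^ k ≠ 0 := pow_ne_zero _ (by norm_num)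
  exact mul_left_cancel₀ h2 this

/-- layers of the filtration -/
def Lmod (H : Subgroup (Matrix I I ℤ_[2])ˣ) (k : ℕ) :
    Submodule (ZMod 2) (Matrix I I (ZMod 2)) where
  carrier := {a | ∃ h ∈ H, ∃ A : Matrix I I ℤ_[2],
    (h : Matrix I I ℤ_[2]) = 1 + (2 : ℤ_[2]) ^ (k+1) • A ∧ rho I A = a}
  zero_mem' := ⟨1, H.one_mem, 0, by simp, by simp⟩
  add_mem' := by
    rintro a b ⟨h, hh, A, hA, rfl⟩ ⟨h', hh', A', hA', rfl⟩
    refine ⟨h * h', H.mul_mem hh hh', A + A' + (2 : ℤ_[2]) ^ (k+1) • (A * A'), ?_, ?_⟩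
    · rw [Units.val_mul, hA, hA']
      simp only [mul_add, add_mul, smul_mul_assoc, mul_smul_comm, mul_one, one_mul, smul_add]
      abel
    · rw [map_add, map_add, rho_two_smul, add_zero]
  smul_mem' := by
    rintro c a ⟨h, hh, A, hA, rfl⟩
    rcases z2_cases c with rfl | rfl
    · exact ⟨1, H.one_mem, 0, by simp, by simp⟩
    · exact ⟨h, hh, A, hA, by simp⟩

lemma sp_of (O : Matrix I I ℤ_[2]) (k : ℕ) (A : Matrix I I ℤ_[2])
    (h : (1 + (2 : ℤ_[2]) ^ (k+1) • A)ᵀ * O * (1 + (2 : ℤ_[2]) ^ (k+1) • A) = O) :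
    (rho I A)ᵀ * rho I O = rho I O * rho I A := by
  have h1 : (2 : ℤ_[2]) ^ (k+1) • (Aᵀ * O + O * A + (2 : ℤ_[2]) ^ (k+1) • (Aᵀ * O * A))
      = (2 : ℤ_[2]) ^ (k+1) • 0 := by
    rw [Matrix.transpose_add, Matrix.transpose_one, Matrix.transpose_smul] at h
    simp only [mul_add, add_mul, smul_mul_assoc, mul_smul_comm, mul_one, one_mul, smul_add,
      mul_assoc] at h ⊢
    rw [smul_zero]
    have := sub_eq_zero.2 h
    rw [← this]; abel
  have h2 := congrArg (rho I) (smul_two_cancel _ h1)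
  rw [map_add, map_add, rho_two_smul, map_mul, map_mul, rho_transpose, map_zero, add_zero] at h2
  rw [eq_neg_of_add_eq_zero_left h2, neg_eq_self_mat]

/-- rank one elements -/
def Nv (J : Matrix I I (ZMod 2)) (v : I → ZMod 2) : Matrix I I (ZMod 2) := vecMulVec v v * J

lemma sym_fun (ψ : Matrix I I (ZMod 2) →ₗ[ZMod 2] ZMod 2)
    (h : ∀ v, ψ (vecMulVec v v) = 0) (s : Matrix I I (ZMod 2)) (hs : sᵀ = s) : ψ s = 0 := by
  have e : ψ s = ∑ x : I × I, s x.1 x.2 * ψ (Matrix.single x.1 x.2 1) := by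
    conv_lhs => rw [Matrix.matrix_eq_sum_single s]
    rw [map_sum, Fintype.sum_prod_type]
    refine Finset.sum_congr rfl fun i _ => ?_
    rw [map_sum]
    refine Finset.sum_congr rfl fun j _ => ?_
    rw [← smul_eq_mul, ← map_smul, Matrix.smul_single, smul_eq_mul, mul_one]
  have hd : ∀ i, ψ (Matrix.single i i 1) = 0 := by
    intro i
    rw [Matrix.single_eq_single_vecMulVec_single]
    exact h _
  have ho : ∀ i j, ψ (Matrix.single i j 1) + ψ (Matrix.single j i 1) = 0 := by
    intro i j
    have := h (Pi.single i 1 + Pi.single j 1)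
    rw [Matrix.add_vecMulVec, Matrix.vecMulVec_add, Matrix.vecMulVec_add, map_add, map_add,
      map_add, h, h] at this
    rw [Matrix.single_eq_single_vecMulVec_single, Matrix.single_eq_single_vecMulVec_single]
    simpa using this
  rw [e]
  refine Finset.sum_involution (fun x _ => (x.2, x.1)) ?_ ?_ ?_ ?_
  · rintro ⟨i, j⟩ _
    have : s j i = s i j := congrFun (congrFun hs i) j
    simp only [this]
    rw [← mul_add, ho, mul_zero]
  · rintro ⟨i, j⟩ _ hne heq
    simp only [Prod.mk.injEq] at heq
    apply hne
    obtain ⟨rfl, _⟩ := heq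
    simp [hd]
  · simp
  · simp

lemma sp_fun (J : Matrix I I (ZMod 2)) (hJt : Jᵀ = J) (hJ : J * J = 1)
    (ψ : Matrix I I (ZMod 2) →ₗ[ZMod 2] ZMod 2)
    (h : ∀ v, ψ (Nv J v) = 0) (a : Matrix I I (ZMod 2)) (ha : aᵀ * J = J * a) : ψ a = 0 := by
  have := sym_fun (ψ ∘ₗ LinearMap.mulRight (ZMod 2) J) (fun v => h v) (a * J) (by
    rw [Matrix.transpose_mul, hJt]
    calc J * aᵀ = J * (aᵀ * J) * J := by rw [mul_assoc, mul_assoc, hJ, mul_one]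
      _ = (J * J) * a * J := by rw [ha]; simp only [mul_assoc]
      _ = a * J := by rw [hJ, one_mul])
  simpa [mul_assoc, hJ] using this

lemma sp_span (J : Matrix I I (ZMod 2)) (hJt : Jᵀ = J) (hJ : J * J = 1)
    (L : Submodule (ZMod 2) (Matrix I I (ZMod 2)))
    (h : ∀ v, Nv J v ∈ L) (a : Matrix I I (ZMod 2)) (ha : aᵀ * J = J * a) : a ∈ L := by
  by_contra hc
  obtain ⟨f, hf, hL⟩ := Submodule.exists_le_ker_of_notMem hc
  exact hf (sp_fun J hJt hJ f (fun v => hL (h v)) a ha)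

lemma vJv (J : Matrix I I (ZMod 2)) (hJt : Jᵀ = J) (hdiag : ∀ i, J i i = 0) (v : I → ZMod 2) :
    v ⬝ᵥ (J *ᵥ v) = 0 := by
  simp only [dotProduct, mulVec, Finset.mul_sum]
  rw [← Fintype.sum_prod_type']
  refine Finset.sum_involution (fun x _ => (x.2, x.1)) ?_ ?_ ?_ ?_
  · rintro ⟨i, j⟩ _
    have : J j i = J i j := congrFun (congrFun hJt i) j
    simp only [this]
    have : v i * (J i j * v j) = v j * (J i j * v i) := by ring
    rw [this]; exact CharTwo.add_self_eq_zero _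
  · rintro ⟨i, j⟩ _ hne heq
    simp only [Prod.mk.injEq] at heq
    apply hne
    obtain ⟨rfl, _⟩ := heq
    simp [hdiag]
  · simp
  · simp

lemma Nv_sq (J : Matrix I I (ZMod 2)) (hJt : Jᵀ = J) (hdiag : ∀ i, J i i = 0) (v : I → ZMod 2) :
    Nv J v * Nv J v = 0 := by
  have : vecMulVec v v * J * vecMulVec v v = 0 := by
    rw [mul_assoc, Matrix.mul_vecMulVec, Matrix.vecMulVec_mul_vecMulVec, vJv J hJt hdiag]
    simp
  rw [Nv, ← mul_assoc, this, zero_mul]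

lemma Nv_sp (J : Matrix I I (ZMod 2)) (hJt : Jᵀ = J) (v : I → ZMod 2) :
    (Nv J v)ᵀ * J = J * Nv J v := by
  rw [Nv, Matrix.transpose_mul, hJt, Matrix.transpose_vecMulVec, mul_assoc]

lemma L_up (J : Matrix I I (ZMod 2)) (hJt : Jᵀ = J) (hJ : J * J = 1) (hdiag : ∀ i, J i i = 0)
    (H : Subgroup (Matrix I I ℤ_[2])ˣ) (h0 : ∀ a, aᵀ * J = J * a → a ∈ Lmod H 0) (k : ℕ) :
    ∀ a, aᵀ * J = J * a → a ∈ Lmod H k := by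
  induction k with
  | zero => exact h0
  | succ k ih =>
    intro a ha
    refine sp_span J hJt hJ _ (fun v => ?_) a ha
    obtain ⟨h, hh, A, hA, hAv⟩ := ih (Nv J v) (Nv_sp J hJt v)
    refine ⟨h * h, H.mul_mem hh hh, A + (2 : ℤ_[2]) ^ k • (A * A), ?_, ?_⟩
    · rw [Units.val_mul, hA]
      simp only [mul_add, add_mul, smul_mul_assoc, mul_smul_comm, mul_one, one_mul, smul_add,
        smul_smul]
      module
    · rw [map_add, rho_smul, map_mul, hAv, Nv_sq J hJt hdiag, smul_zero, add_zero]

lemma closure_step (O : Matrix I I ℤ_[2])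
    (H : Subgroup (Matrix I I ℤ_[2])ˣ)
    (hSp : ∀ h ∈ H, (h : Matrix I I ℤ_[2])ᵀ * O * h = O)
    (hL : ∀ k a, aᵀ * rho I O = rho I O * a → a ∈ Lmod H k)
    (y : (Matrix I I ℤ_[2])ˣ) (hy : (y : Matrix I I ℤ_[2])ᵀ * O * y = O)
    (hy1 : rho I y = 1) (k : ℕ) :
    ∃ h ∈ H, ∃ A : Matrix I I ℤ_[2], 
      (h⁻¹ * y : (Matrix I I ℤ_[2])ˣ) = 1 + (2 : ℤ_[2]) ^ (k+1) • A := by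
  have hmulSp : ∀ a b : Matrix I I ℤ_[2], aᵀ * O * a = O → bᵀ * O * b = O →
      (a * b)ᵀ * O * (a * b) = O := by
    intro a b ha hb
    rw [Matrix.transpose_mul]
    calc bᵀ * aᵀ * O * (a * b) = bᵀ * (aᵀ * O * a) * b := by simp only [mul_assoc]
      _ = O := by rw [ha, hb]
  induction k with
  | zero =>
    obtain ⟨Y, hY⟩ := exists_half ((y : Matrix I I ℤ_[2]) - 1) (by rw [map_sub, hy1]; simp)
    exact ⟨1, H.one_mem, Y, by simp [← hY]⟩
  | succ k ih =>
    obtain ⟨h, hh, A, hA⟩ := ih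
    have hs := sp_of O k A (by
      rw [← hA, Units.val_mul]
      exact hmulSp _ _ (hSp _ (H.inv_mem hh)) hy)
    obtain ⟨h', hh', A', hA', hr⟩ := hL k _ hs
    obtain ⟨Y, hY⟩ := exists_half (A - A') (by rw [map_sub, hr, sub_self])
    refine ⟨h * h', H.mul_mem hh hh', (↑h'⁻¹ : Matrix I I ℤ_[2]) * Y, ?_⟩
    have e1 : (h * h')⁻¹ * y = h'⁻¹ * (h⁻¹ * y) := by group
    rw [e1, Units.val_mul, hA]
    have e2 : (1 : Matrix I I ℤ_[2]) + (2 : ℤ_[2]) ^ (k+1) • A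
        = h' + (2 : ℤ_[2]) ^ (k+1+1) • Y := by
      rw [hA', pow_succ _ (k+1), mul_smul, ← hY]; module
    rw [e2, mul_add, Units.inv_mul, mul_smul_comm]

lemma mem_of_closed (H : Subgroup (Matrix I I ℤ_[2])ˣ)
    (hc : IsClosed (H : Set (Matrix I I ℤ_[2])ˣ)) (y : (Matrix I I ℤ_[2])ˣ)
    (hk : ∀ k : ℕ, ∃ h ∈ H, ∃ A : Matrix I I ℤ_[2], 
      (h⁻¹ * y : (Matrix I I ℤ_[2])ˣ) = 1 + (2 : ℤ_[2]) ^ (k+1) • A) : y ∈ H := by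
  choose h hh A hA using hk
  have key : ∀ B : ℕ → Matrix I I ℤ_[2], Filter.Tendsto
      (fun k => (1 : Matrix I I ℤ_[2]) + (2 : ℤ_[2]) ^ (k+1) • B k) Filter.atTop (nhds 1) := by
    intro B
    have hz : Filter.Tendsto (fun k => (2 : ℤ_[2]) ^ (k+1) • B k) Filter.atTop (nhds 0) := by
      refine tendsto_pi_nhds.2 fun i => ?_
      refine tendsto_pi_nhds.2 fun j => ?_
      simp only [Matrix.smul_apply, smul_eq_mul, Matrix.zero_apply]
      refine squeeze_zero_norm (a := fun k : ℕ => ((1:ℝ)/2)^(k+1)) (fun k => ?_) ?_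
      · rw [norm_mul, norm_pow]
        have : ‖(2 : ℤ_[2])‖ = 1/2 := by
          have := PadicInt.norm_p (p := 2)
          simpa using this
        rw [this]
        exact mul_le_of_le_one_right (by positivity) (PadicInt.norm_le_one _)
      · exact (tendsto_pow_atTop_nhds_zero_of_lt_one (by norm_num) (by norm_num)).comp
          (Filter.tendsto_add_atTop_nat 1)
    simpa using hz.const_add 1
  have ht : Filter.Tendsto (fun k => (h k)⁻¹ * y) Filter.atTop (nhds 1) := by
    rw [Units.isInducing_embedProduct.tendsto_nhds_iff]
    have : (Units.embedProduct (Matrix I I ℤ_[2]) 1) = (1, MulOpposite.op 1) := rfl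
    rw [this]
    refine Filter.Tendsto.prodMk_nhds ?_ ?_
    · simp only [hA]; exact key A
    · refine (MulOpposite.continuous_op.tendsto 1).comp ?_
      have : ∀ k, (↑((h k)⁻¹ * y)⁻¹ : Matrix I I ℤ_[2]) = 1 + (2 : ℤ_[2]) ^ (k+1) •
          (-((↑((h k)⁻¹ * y)⁻¹ : Matrix I I ℤ_[2]) * A k)) := by
        intro k
        have h1 := Units.inv_mul ((h k)⁻¹ * y)
        rw [hA k, mul_add, mul_one, mul_smul_comm] at h1
        rw [smul_neg, ← h1]; abel
      exact (key _).congr fun k => (this k).symm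
  have ht2 : Filter.Tendsto (fun k => y * ((h k)⁻¹ * y)⁻¹) Filter.atTop (nhds y) := by
    simpa using ht.inv.const_mul y
  refine hc.mem_of_tendsto ht2 (Filter.Eventually.of_forall fun k => ?_)
  have : y * ((h k)⁻¹ * y)⁻¹ = h k := by group
  rw [this]; exact hh k

end core
section comb
open Matrix

lemma ex_third {n : ℕ} (hn : 3 ≤ n) (i j : Fin n) : ∃ k, k ≠ i ∧ k ≠ j := by
  by_contra hc
  push Not at hc
  have : (Finset.univ : Finset (Fin n)) ⊆ {i, j} := by
    intro k _
    by_cases h : k = i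
    · simp [h]
    · simp [hc k h]
  have h2 := Finset.card_le_card this
  have h3 := Finset.card_le_two (a := i) (b := j)
  simp at h2
  omega

lemma comb {W : Type} [AddCommGroup W] [Module (ZMod 2) W] {n : ℕ} (hn : 3 ≤ n)
    (hn2 : (n : ZMod 2) = 0)
    (B : W →ₗ[ZMod 2] W →ₗ[ZMod 2] ZMod 2) (hBs : ∀ x y, B x y = B y x)
    (d : Fin n → W) (hd : ∑ i, d i = 0)
    (hdB : ∀ i j k l, B (d i + d j) (d k + d l) = (if i = k then 1 else 0)
      + (if i = l then 1 else 0) + (if j = k then 1 else 0) + (if j = l then 1 else 0))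
    (hspan : ∀ p : Submodule (ZMod 2) W, (∀ i j, d i + d j ∈ p) → ∀ x, x ∈ p)
    (Q : Submodule (ZMod 2) (W → ZMod 2))
    (hQT : ∀ q ∈ Q, ∀ i j, (fun x => q (x + B (d i + d j) x • (d i + d j))) ∈ Q)
    (hQq : ∀ q ∈ Q, ∃ β : W →ₗ[ZMod 2] W →ₗ[ZMod 2] ZMod 2,
      (∀ x y, q (x + y) = q x + q y + β x y) ∧ ∀ x, β x x = 0)
    (q : W → ZMod 2) (hq : q ∈ Q) (hq0 : q ≠ 0) :
    (∀ w, (fun x => B x w) ∈ Q) ∨ 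
    (∃ i j, q (d i + d j) = 1 ∧ ∀ x, q (x + B (d i + d j) x • (d i + d j)) = q x) := by
  have aa : ∀ c : ZMod 2, c + c = 0 := CharTwo.add_self_eq_zero
  have ww : ∀ x : W, x + x = 0 := fun x => by
    have : (2 : ZMod 2) • x = x + x := two_smul _ x
    rw [← this]; simp [show (2 : ZMod 2) = 0 from rfl]
  -- the difference operator
  have hdiff : ∀ (q : W → ZMod 2) (β : W →ₗ[ZMod 2] W →ₗ[ZMod 2] ZMod 2),
      (∀ x y, q (x + y) = q x + q y + β x y) → ∀ u x,
      q (x + B u x • u) + q x = B u x * (q u + β x u) := by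
    intro q β h u x
    rcases z2_cases (B u x) with h0 | h0 <;> rw [h0]
    · simp [aa]
    · rw [one_smul, h, one_mul]
      linear_combination aa (q x)
  have hDQ : ∀ (q : W → ZMod 2), q ∈ Q → ∀ (β : W →ₗ[ZMod 2] W →ₗ[ZMod 2] ZMod 2),
      (∀ x y, q (x + y) = q x + q y + β x y) → ∀ i j,
      (fun x => B (d i + d j) x * (q (d i + d j) + β x (d i + d j))) ∈ Q := by
    intro q hq β h i j
    have := Q.add_mem (hQT q hq i j) hq
    convert this using 1
    ext x
    exact (hdiff q β h _ x).symm
  -- linear forms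
  have hlin : ∀ i j, i ≠ j → (fun x => B x (d i + d j)) ∈ Q → ∀ w, (fun x => B x w) ∈ Q := by
    intro i j hij h
    have hjk : ∀ k, (fun x => B x (d j + d k)) ∈ Q := by
      intro k
      by_cases hki : k = i
      · subst hki; rw [add_comm]; exact h
      by_cases hkj : k = j
      · subst hkj; rw [ww]; simp only [map_zero]; exact Q.zero_mem
      have := hDQ _ h 0 (by intro x y; simp) j k
      convert this using 1
      ext x
      have e : B (d j + d k) (d i + d j) = 1 := by
        rw [hdB]; simp [hki, hkj, Ne.symm hij, Ne.symm hkj]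
      rw [e, hBs]; simp
    let Z : Submodule (ZMod 2) W :=
      { carrier := {w | (fun x => B x w) ∈ Q}
        zero_mem' := by simp only [Set.mem_ofPred_eq, map_zero]; exact Q.zero_mem
        add_mem' := by
          intro a b ha hb
          have := Q.add_mem ha hb
          simp only [Set.mem_ofPred_eq, map_add]
          exact this
        smul_mem' := by
          intro c a ha
          have := Q.smul_mem c ha
          simp only [Set.mem_ofPred_eq, map_smul]
          exact this }
    refine hspan Z fun k l => ?_
    have e : d k + d l = (d j + d k) + (d j + d l) := by
      rw [show (d j + d k) + (d j + d l) = (d j + d j) + (d k + d l) by abel, ww, zero_add]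
    rw [e]
    exact Z.add_mem (hjk k) (hjk l)
  obtain ⟨β, hβ, hβ0⟩ := hQq q hq
  have hβs : ∀ x y, β x y = β y x := by
    intro x y
    have h1 := hβ x y
    have h2 := hβ y x
    rw [add_comm y x] at h2
    linear_combination h2 - h1
  by_cases hcase : ∃ i j k l, i ≠ j ∧ k ≠ i ∧ k ≠ j ∧ l ≠ i ∧ l ≠ j ∧ k ≠ l ∧
      β (d k + d l) (d i + d j) = 1
  · left
    obtain ⟨a, b, c, e, hab, hca, hcb, hea, heb, hce, hb1⟩ := hcase
    -- the subspace Y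
    let Y : Submodule (ZMod 2) W :=
      { carrier := {y | (fun x => B x (d a + d b) * B x y) ∈ Q}
        zero_mem' := by simp only [Set.mem_ofPred_eq, map_zero, mul_zero]; exact Q.zero_mem
        add_mem' := by
          intro s t ha hb
          have := Q.add_mem ha hb
          show (fun x => B x (d a + d b) * B x (s + t)) ∈ Q
          convert this using 1
          ext x
          show B x (d a + d b) * B x (s + t) = B x (d a + d b) * B x s + B x (d a + d b) * B x t
          rw [map_add (B x) s t, mul_add]
        smul_mem' := by
          intro s t ha
          have := Q.smul_mem s ha
          simp only [Set.mem_ofPred_eq, map_smul, mul_smul_comm]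
          exact this }
    have hBce : B (d a + d b) (d c + d e) = 0 := by
      rw [hdB]; simp [hca.symm, hcb.symm, hea.symm, heb.symm]
    have hY0 : d c + d e ∈ Y := by
      have h1 := hDQ q hq β hβ a b
      obtain ⟨β1, hβ1, _⟩ := hQq _ h1
      have h2 := hDQ _ h1 β1 hβ1 c e
      show (fun x => B x (d a + d b) * B x (d c + d e)) ∈ Q
      convert h2 using 1
      ext x
      have h3 := hβ1 x (d c + d e)
      simp only [map_add (B (d a + d b)) x, map_add β x, LinearMap.add_apply (β x), hBce, hb1,
        add_zero, zero_mul] at h3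
      rw [hBce, zero_mul, zero_add]
      have h4 : β1 x (d c + d e) = B (d a + d b) x := by linear_combination -h3
      rw [h4, hBs x, hBs x, mul_comm]
    have hYv : ∀ y ∈ Y, ∀ i j, B (d i + d j) (d a + d b) = 0 → B (d i + d j) y = 1 →
        d i + d j ∈ Y := by
      intro y hy i j h0 h1
      obtain ⟨β1, hβ1, _⟩ := hQq _ hy
      have h2 := hDQ _ hy β1 hβ1 i j
      show (fun x => B x (d a + d b) * B x (d i + d j)) ∈ Q
      convert h2 using 1
      ext x
      have h3 := hβ1 x (d i + d j)
      rw [h0, zero_mul, zero_add]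
      simp only [map_add B x, LinearMap.add_apply (B x), h0, h1,
        add_zero, zero_mul] at h3
      have h4 : β1 x (d i + d j) = B x (d a + d b) := by linear_combination -h3
      rw [h4, hBs _ x, mul_comm]
    have hYk : ∀ k, k ≠ a → k ≠ b → d c + d k ∈ Y := by
      intro k hka hkb
      by_cases hkc : k = c
      · subst hkc; rw [ww]; exact Y.zero_mem
      by_cases hke : k = e
      · subst hke; exact hY0
      refine hYv _ hY0 c k ?_ ?_
      · rw [hdB]; simp [hca, hcb, hka, hkb]
      · rw [hdB]; simp [hce, hkc, hke]
    have hYu : d a + d b ∈ Y := by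
      have h1 : ∑ k ∈ (Finset.univ.erase a).erase b, (d c + d k) ∈ Y := by
        refine Y.sum_mem fun k hk => ?_
        simp only [Finset.mem_erase, Finset.mem_univ, and_true] at hk
        exact hYk k hk.2 hk.1
      have h2 : ∑ k, (d c + d k) = 0 := by
        rw [Finset.sum_add_distrib, hd, add_zero, Finset.sum_const, Finset.card_univ,
          Fintype.card_fin, ← Nat.cast_smul_eq_nsmul (ZMod 2), hn2, zero_smul]
      rw [← Finset.add_sum_erase _ _ (Finset.mem_univ a),
        ← Finset.add_sum_erase _ _ (Finset.mem_erase.2 ⟨hab.symm, Finset.mem_univ b⟩),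
        ← add_assoc] at h2
      have h3 := neg_eq_of_add_eq_zero_right h2
      rw [← h3] at h1
      have h4 := Y.neg_mem h1
      rw [neg_neg] at h4
      have e : d a + d b = d c + d a + (d c + d b) := by
        rw [show (d c + d a) + (d c + d b) = (d c + d c) + (d a + d b) by abel, ww, zero_add]
      rw [e]; exact h4
    refine hlin a b hab ?_
    have : (fun x => B x (d a + d b) * B x (d a + d b)) ∈ Q := hYu
    convert this using 1
    ext x
    rcases z2_cases (B x (d a + d b)) with h | h <;> rw [h] <;> rfl
  · push Not at hcase
    have hβB : ∀ i j, i ≠ j → ∃ c, ∀ x, β x (d i + d j) = c * B x (d i + d j) := by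
      intro i j hij
      obtain ⟨k0, hk0i, hk0j⟩ := ex_third hn i j
      refine ⟨β (d i + d k0) (d i + d j), ?_⟩
      set c := β (d i + d k0) (d i + d j) with hc
      have hp := hspan (LinearMap.ker (β.flip (d i + d j) - c • B.flip (d i + d j))) (by
        have h1 : ∀ k, d i + d k ∈
            LinearMap.ker (β.flip (d i + d j) - c • B.flip (d i + d j)) := by
          intro k
          rw [LinearMap.mem_ker, LinearMap.sub_apply, LinearMap.smul_apply,
            LinearMap.flip_apply, LinearMap.flip_apply, smul_eq_mul]
          by_cases hki : k = i
          · subst hki; rw [ww]; simp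
          by_cases hkj : k = j
          · subst hkj; rw [hβ0, hdB]; simp [hki, hij, aa]
          have e1 : B (d i + d k) (d i + d j) = 1 := by
            rw [hdB]; simp [hki, hkj, hij]
          have e2 : β (d k + d k0) (d i + d j) = 0 := by
            by_cases hkk : k = k0
            · subst hkk; rw [ww]; simp
            rcases z2_cases (β (d k + d k0) (d i + d j)) with h | h
            · exact h
            · exact absurd h (hcase i j k k0 hij hki hkj hk0i hk0j hkk)
          have e3 : d i + d k = (d i + d k0) + (d k + d k0) := by
            rw [show (d i + d k0) + (d k + d k0) = (d k0 + d k0) + (d i + d k) by abel, ww,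
              zero_add]
          rw [e1, e3, map_add β, LinearMap.add_apply, e2, ← hc]; ring
        intro k l
        have e : d k + d l = (d i + d k) + (d i + d l) := by
          rw [show (d i + d k) + (d i + d l) = (d i + d i) + (d k + d l) by abel, ww, zero_add]
        rw [e]
        exact Submodule.add_mem _ (h1 k) (h1 l))
      intro x
      have := hp x
      rw [LinearMap.mem_ker, LinearMap.sub_apply, LinearMap.smul_apply,
            LinearMap.flip_apply, LinearMap.flip_apply, smul_eq_mul, sub_eq_zero] at this
      exact this
    by_cases hA : ∀ w, (fun x => B x w) ∈ Q
    · exact Or.inl hA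
    right
    have hqc : ∀ i j, i ≠ j → ∀ x, β x (d i + d j) = q (d i + d j) * B x (d i + d j) := by
      intro i j hij x
      obtain ⟨c, hc⟩ := hβB i j hij
      suffices c = q (d i + d j) by rw [← this]; exact hc x
      by_contra hne
      apply hA
      refine hlin i j hij ?_
      have h1 := hDQ q hq β hβ i j
      convert h1 using 1
      ext x
      rw [hc x, hBs x]
      have : q (d i + d j) + c = 1 := by
        revert hne; generalize q (d i + d j) = s; clear hc
        revert s c; decide
      rcases z2_cases (B (d i + d j) x) with h | h <;> rw [h] <;> simp [this]
    by_contra hno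
    push Not at hno
    have hqe : ∀ i j, q (d i + d j) = 0 := by
      intro i j
      have hq00 : q 0 = 0 := by
        have := hβ 0 0
        simp only [add_zero, map_zero] at this
        rw [aa] at this; exact this
      by_cases hij : i = j
      · subst hij; rw [ww, hq00]
      rcases z2_cases (q (d i + d j)) with h | h
      · exact h
      exfalso
      obtain ⟨x, hx⟩ := hno i j h
      apply hx
      have h1 := hdiff q β hβ (d i + d j) x
      rw [hqc i j hij x, h, hBs x] at h1
      have h2 : B (d i + d j) x * (1 + 1 * B (d i + d j) x) = 0 := by
        generalize B (d i + d j) x = s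
        revert s; decide
      rw [h2] at h1
      linear_combination h1 - aa (q x)
    have hβz : ∀ x y, β x y = 0 := by
      intro x
      have := hspan (LinearMap.ker (β x)) (by
        intro i j
        rw [LinearMap.mem_ker]
        by_cases hij : i = j
        · subst hij; rw [ww]; simp
        rw [hqc i j hij x, hqe, zero_mul])
      exact this
    apply hq0
    let Z : Submodule (ZMod 2) W :=
      { carrier := {w | q w = 0}
        zero_mem' := by
          have := hβ 0 0
          simp only [add_zero, map_zero] at this
          rw [aa] at this; exact this
        add_mem' := by
          intro a b ha hb
          simp only [Set.mem_ofPred_eq] at *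
          rw [hβ, ha, hb, hβz]; simp
        smul_mem' := by
          intro c a ha
          rcases z2_cases c with rfl | rfl
          · have := hβ 0 0
            simp only [add_zero, map_zero] at this
            rw [aa] at this; simpa using this
          · simpa using ha }
    ext x
    exact hspan Z hqe x
end comb
section rel
open Matrix
set_option linter.unusedSectionVars false
variable {I : Type} [Fintype I] [DecidableEq I]

lemma L1_of (H : Subgroup (Matrix I I ℤ_[2])ˣ) (h h' : (Matrix I I ℤ_[2])ˣ) (hh : h ∈ H)
    (hh' : h' ∈ H) (C p q : Matrix I I ℤ_[2]) 
    (e : (h : Matrix I I ℤ_[2]) = C * (1 + (2 : ℤ_[2]) • p))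
    (e' : (h' : Matrix I I ℤ_[2]) = C * (1 + (2 : ℤ_[2]) • q)) :
    rho I q + rho I p ∈ Lmod H 0 := by
  refine ⟨h⁻¹ * h', H.mul_mem (H.inv_mem hh) hh', (↑h⁻¹ : Matrix I I ℤ_[2]) * C * (q - p), ?_, ?_⟩
  · have e1 : (h' : Matrix I I ℤ_[2]) = h + (2 : ℤ_[2]) • (C * (q - p)) := by
      rw [e, e']
      simp only [mul_add, mul_sub, mul_smul_comm, smul_sub]; abel
    rw [Units.val_mul, e1, mul_add, Units.inv_mul, mul_smul_comm, mul_assoc]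
    simp
  · have e2 : rho I ((↑h⁻¹ : Matrix I I ℤ_[2]) * C) = 1 := by
      have := Units.inv_mul h
      rw [e, ← mul_assoc, mul_add, mul_one, mul_smul_comm] at this
      have := congrArg (rho I) this
      rwa [map_add, rho_two_smul', add_zero, map_one] at this
    rw [map_mul, e2, one_mul, map_sub, sub_eq_add_neg, neg_eq_self_mat]

lemma L_conj (H : Subgroup (Matrix I I ℤ_[2])ˣ) (k : ℕ) (h : (Matrix I I ℤ_[2])ˣ) (hh : h ∈ H)
    (τ : Matrix I I (ZMod 2)) (hτ : rho I h = τ) (hττ : τ * τ = 1)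
    (a : Matrix I I (ZMod 2)) (ha : a ∈ Lmod H k) : τ * a * τ ∈ Lmod H k := by
  obtain ⟨x, hx, A, hA, rfl⟩ := ha
  refine ⟨h * x * h⁻¹, H.mul_mem (H.mul_mem hh hx) (H.inv_mem hh),
    h * A * (↑h⁻¹ : Matrix I I ℤ_[2]), ?_, ?_⟩
  · rw [Units.val_mul, Units.val_mul, hA]
    simp [mul_add, add_mul]
  · have : rho I (↑h⁻¹ : Matrix I I ℤ_[2]) = τ := by
      have h1 := congrArg (rho I) (Units.mul_inv h)
      rw [map_mul, map_one, hτ] at h1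
      calc rho I (↑h⁻¹ : Matrix I I ℤ_[2]) = τ * τ * rho I (↑h⁻¹ : Matrix I I ℤ_[2]) := by
            rw [hττ, one_mul]
        _ = τ := by rw [mul_assoc, h1, mul_one]
    rw [map_mul, map_mul, hτ, this]

/-- reduction of vectors -/
noncomputable def rv (u : I → ℤ_[2]) : I → ZMod 2 := fun i => PadicInt.toZMod (u i)

lemma rv_surj (u : I → ZMod 2) : ∃ v, rv v = u := by
  refine ⟨fun i => ((u i).val : ℤ_[2]), ?_⟩
  ext i
  simp [rv]

/-- integral rank one elements -/
noncomputable def Nt (O : Matrix I I ℤ_[2]) (v : I → ℤ_[2]) : Matrix I I ℤ_[2] :=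
  vecMulVec v v * O

lemma rho_Nt (O : Matrix I I ℤ_[2]) (v : I → ℤ_[2]) :
    rho I (Nt O v) = Nv (rho I O) (rv v) := by
  rw [Nt, map_mul, Nv]
  congr 1
  ext i j
  simp [rho, rv, vecMulVec_apply]

lemma Nt_mul (O : Matrix I I ℤ_[2]) (u v : I → ℤ_[2]) (h : u ⬝ᵥ (O *ᵥ v) = 0) :
    Nt O u * Nt O v = 0 := by
  have : vecMulVec u u * O * vecMulVec v v = 0 := by
    rw [mul_assoc, Matrix.mul_vecMulVec, Matrix.vecMulVec_mul_vecMulVec, h]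
    simp
  rw [Nt, Nt, ← mul_assoc, this, zero_mul]

lemma O_skew (O : Matrix I I ℤ_[2]) (hO : Oᵀ = -O) (u v : I → ℤ_[2]) :
    u ⬝ᵥ (O *ᵥ v) = - (v ⬝ᵥ (O *ᵥ u)) := by
  rw [Matrix.dotProduct_mulVec, ← Matrix.mulVec_transpose, hO, dotProduct_comm, neg_mulVec,
    dotProduct_neg]

lemma O_alt (O : Matrix I I ℤ_[2]) (hO : Oᵀ = -O) (u : I → ℤ_[2]) :
    u ⬝ᵥ (O *ᵥ u) = 0 := by
  have := O_skew O hO u u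
  exact self_eq_neg.1 this

lemma lift_T (O : Matrix I I ℤ_[2]) (hO : Oᵀ = -O) (u : I → ℤ_[2])
    (h : Matrix I I ℤ_[2]) (hh : hᵀ * O * h = O) 
    (hr : rho I h = 1 + Nv (rho I O) (rv u)) :
    ∃ A, h = (1 + Nt O u) * (1 + (2 : ℤ_[2]) • A) ∧
      (rho I A)ᵀ * rho I O = rho I O * rho I A := by
  have hN : Nt O u * Nt O u = 0 := Nt_mul O u u (O_alt O hO u)
  have hNt : (Nt O u)ᵀ * O = - (O * Nt O u) := by
    rw [Nt, Matrix.transpose_mul, hO, Matrix.transpose_vecMulVec]; simp [mul_assoc]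
  obtain ⟨A, hA⟩ := exists_half ((1 - Nt O u) * h - 1) (by
    rw [map_sub, map_mul, map_sub, hr, rho_Nt, map_one, ← rho_Nt]
    have : rho I (Nt O u) * rho I (Nt O u) = 0 := by rw [← map_mul, hN, map_zero]
    simp [mul_add, sub_mul, this])
  have hA' : (1 - Nt O u) * h = 1 + (2 : ℤ_[2]) • A := by rw [← hA]; abel
  refine ⟨A, ?_, ?_⟩
  · rw [← hA', ← mul_assoc]
    have : (1 + Nt O u) * (1 - Nt O u) = 1 := by
      simp [mul_sub, add_mul, hN]
    rw [this, one_mul]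
  · refine sp_of O 0 A ?_
    rw [zero_add, pow_one, ← hA', Matrix.transpose_mul]
    have : (1 - Nt O u)ᵀ * O * (1 - Nt O u) = O := by
      rw [Matrix.transpose_sub, Matrix.transpose_one, sub_mul, hNt]
      simp [mul_sub, add_mul, mul_assoc, hN]
    calc hᵀ * (1 - Nt O u)ᵀ * O * ((1 - Nt O u) * h)
        = hᵀ * ((1 - Nt O u)ᵀ * O * (1 - Nt O u)) * h := by simp only [mul_assoc]
      _ = O := by rw [this, hh]

lemma two_mul_two (x y : Matrix I I ℤ_[2]) :
    (1 + (2 : ℤ_[2]) • x) * (1 + (2 : ℤ_[2]) • y)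
      = 1 + (2 : ℤ_[2]) • (x + y + (2 : ℤ_[2]) • (x * y)) := by
  simp only [mul_add, add_mul, smul_mul_assoc, mul_smul_comm, mul_one, one_mul, smul_add]
  abel

lemma swap_T (T T' A : Matrix I I ℤ_[2]) (h : T * T' = 1) :
    (1 + (2 : ℤ_[2]) • A) * T = T * (1 + (2 : ℤ_[2]) • (T' * A * T)) := by
  rw [mul_add, mul_smul_comm, ← mul_assoc, ← mul_assoc, h]
  simp [add_mul]

lemma T_inv (O : Matrix I I ℤ_[2]) (hO : Oᵀ = -O) (u : I → ℤ_[2]) :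
    (1 + Nt O u) * (1 - Nt O u) = 1 := by
  have hN : Nt O u * Nt O u = 0 := Nt_mul O u u (O_alt O hO u)
  simp [mul_sub, add_mul, hN]

lemma rho_T (O : Matrix I I ℤ_[2]) (u : I → ℤ_[2]) :
    rho I (1 + Nt O u) = 1 + Nv (rho I O) (rv u) := by
  rw [map_add, map_one, rho_Nt]

lemma rho_T' (O : Matrix I I ℤ_[2]) (u : I → ℤ_[2]) :
    rho I (1 - Nt O u) = 1 + Nv (rho I O) (rv u) := by
  rw [map_sub, map_one, rho_Nt, sub_eq_add_neg, neg_eq_self_mat]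

lemma R1 (O : Matrix I I ℤ_[2]) (hO : Oᵀ = -O) (u : I → ℤ_[2])
    (H : Subgroup (Matrix I I ℤ_[2])ˣ) (h : (Matrix I I ℤ_[2])ˣ) (hh : h ∈ H)
    (A : Matrix I I ℤ_[2])
    (hA : (h : Matrix I I ℤ_[2]) = (1 + Nt O u) * (1 + (2 : ℤ_[2]) • A)) :
    Nv (rho I O) (rv u) + (1 + Nv (rho I O) (rv u)) * rho I A * (1 + Nv (rho I O) (rv u))
      + rho I A ∈ Lmod H 0 := by
  have hN : Nt O u * Nt O u = 0 := Nt_mul O u u (O_alt O hO u)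
  have hT := T_inv O hO u
  have hTT : (1 + Nt O u) * (1 + Nt O u) = 1 + (2 : ℤ_[2]) • Nt O u := by
    simp only [mul_add, add_mul, hN, mul_one, one_mul, two_smul]; abel
  have e : ((h * h : (Matrix I I ℤ_[2])ˣ) : Matrix I I ℤ_[2])
      = (1 + Nt O u) * (1 + Nt O u) * ((1 + (2 : ℤ_[2]) • ((1 - Nt O u) * A * (1 + Nt O u)))
        * (1 + (2 : ℤ_[2]) • A)) := by
    rw [Units.val_mul, hA, ← mul_assoc, mul_assoc (1 + Nt O u) (1 + (2 : ℤ_[2]) • A),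
      swap_T _ _ A hT]
    simp only [mul_assoc]
  rw [hTT, two_mul_two, two_mul_two] at e
  have := L1_of H 1 (h * h) H.one_mem (H.mul_mem hh hh) 1 0 _ (by simp) (by rw [one_mul]; exact e)
  simp only [map_add, rho_two_smul', map_zero, add_zero, map_mul, map_sub, map_one] at this
  rw [rho_Nt, sub_eq_add_neg, neg_eq_self_mat, ← add_assoc] at this
  exact this

lemma R2 (O : Matrix I I ℤ_[2]) (hO : Oᵀ = -O) (u v : I → ℤ_[2]) (huv : u ⬝ᵥ (O *ᵥ v) = 0)
    (H : Subgroup (Matrix I I ℤ_[2])ˣ) (h k : (Matrix I I ℤ_[2])ˣ) (hh : h ∈ H) (hk : k ∈ H)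
    (A B : Matrix I I ℤ_[2])
    (hA : (h : Matrix I I ℤ_[2]) = (1 + Nt O u) * (1 + (2 : ℤ_[2]) • A))
    (hB : (k : Matrix I I ℤ_[2]) = (1 + Nt O v) * (1 + (2 : ℤ_[2]) • B)) :
    ((1 + Nv (rho I O) (rv v)) * rho I A * (1 + Nv (rho I O) (rv v)) + rho I B) + 
      ((1 + Nv (rho I O) (rv u)) * rho I B * (1 + Nv (rho I O) (rv u)) + rho I A) ∈ Lmod H 0 := by
  have huv' : v ⬝ᵥ (O *ᵥ u) = 0 := by rw [O_skew O hO, huv, neg_zero]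
  have hc : (1 + Nt O v) * (1 + Nt O u) = (1 + Nt O u) * (1 + Nt O v) := by
    simp only [mul_add, add_mul, Nt_mul O u v huv, Nt_mul O v u huv', mul_one, one_mul]; abel
  have e1 : ((h * k : (Matrix I I ℤ_[2])ˣ) : Matrix I I ℤ_[2])
      = (1 + Nt O u) * (1 + Nt O v) * ((1 + (2 : ℤ_[2]) • ((1 - Nt O v) * A * (1 + Nt O v)))
        * (1 + (2 : ℤ_[2]) • B)) := by
    rw [Units.val_mul, hA, hB, ← mul_assoc, mul_assoc (1 + Nt O u) (1 + (2 : ℤ_[2]) • A),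
      swap_T _ _ A (T_inv O hO v)]
    simp only [mul_assoc]
  have e2 : ((k * h : (Matrix I I ℤ_[2])ˣ) : Matrix I I ℤ_[2])
      = (1 + Nt O u) * (1 + Nt O v) * ((1 + (2 : ℤ_[2]) • ((1 - Nt O u) * B * (1 + Nt O u)))
        * (1 + (2 : ℤ_[2]) • A)) := by
    rw [← hc, Units.val_mul, hA, hB, ← mul_assoc, mul_assoc (1 + Nt O v) (1 + (2 : ℤ_[2]) • B),
      swap_T _ _ B (T_inv O hO u)]
    simp only [mul_assoc]
  rw [two_mul_two] at e1 e2
  have := L1_of H _ _ (H.mul_mem hk hh) (H.mul_mem hh hk) _ _ _ e2 e1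
  rw [map_add _ (_ + _) (_ • _), map_add _ (_ + _) (_ • _), rho_two_smul', rho_two_smul',
    add_zero, add_zero, map_add, map_add, map_mul, map_mul, map_mul, map_mul, rho_T, rho_T',
    rho_T, rho_T'] at this
  exact this

/-- the bilinear form -/
noncomputable def BJ (J : Matrix I I (ZMod 2)) :
    (I → ZMod 2) →ₗ[ZMod 2] (I → ZMod 2) →ₗ[ZMod 2] ZMod 2 := Matrix.toLinearMap₂' (ZMod 2) J

lemma BJ_apply (J : Matrix I I (ZMod 2)) (x y) : BJ J x y = x ⬝ᵥ (J *ᵥ y) := 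
  Matrix.toLinearMap₂'_apply' J x y

lemma BJ_symm (J : Matrix I I (ZMod 2)) (hJt : Jᵀ = J) (x y) : BJ J x y = BJ J y x := by
  rw [BJ_apply, BJ_apply, Matrix.dotProduct_mulVec, ← Matrix.mulVec_transpose, hJt,
    dotProduct_comm]

lemma Nv_mulVec (J : Matrix I I (ZMod 2)) (u x) : Nv J u *ᵥ x = BJ J u x • u := by
  rw [Nv, ← Matrix.mulVec_mulVec, Matrix.vecMulVec_mulVec, BJ_apply]
  simp

lemma tau_mulVec (J : Matrix I I (ZMod 2)) (u x) :
    (1 + Nv J u) *ᵥ x = x + BJ J u x • u := by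
  rw [Matrix.add_mulVec, Matrix.one_mulVec, Nv_mulVec]

lemma tau_sq (J : Matrix I I (ZMod 2)) (hJt : Jᵀ = J) (hdiag : ∀ i, J i i = 0) (u) :
    (1 + Nv J u) * (1 + Nv J u) = 1 := by
  have : Nv J u + Nv J u = 0 := by
    conv_lhs => rw [← neg_eq_self_mat (Nv J u)]
    rw [neg_eq_self_mat, ← neg_eq_self_mat (Nv J u)]; simp [neg_eq_self_mat]
    ext i j; exact CharTwo.add_self_eq_zero _
  simp only [mul_add, add_mul, Nv_sq J hJt hdiag, mul_one, one_mul, add_zero]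
  rw [add_assoc, this, add_zero]

lemma tau_J (J : Matrix I I (ZMod 2)) (hJt : Jᵀ = J) (u) :
    (1 + Nv J u)ᵀ * J = J * (1 + Nv J u) := by
  rw [Matrix.transpose_add, add_mul, mul_add, Nv_sp J hJt]; simp

lemma tau_Nv (J : Matrix I I (ZMod 2)) (hJt : Jᵀ = J) (u v) :
    (1 + Nv J u) * Nv J v * (1 + Nv J u) = Nv J (v + BJ J u v • u) := by
  rw [← tau_mulVec]
  conv_rhs => rw [Nv]
  rw [← Matrix.mul_vecMulVec, ← Matrix.vecMul_transpose, ← Matrix.vecMulVec_mul, mul_assoc,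
    mul_assoc, mul_assoc, tau_J J hJt, show Nv J v = vecMulVec v v * J from rfl, mul_assoc]

/-- the functionals -/
def fw (J : Matrix I I (ZMod 2)) (w : I → ZMod 2) : Matrix I I (ZMod 2) →ₗ[ZMod 2] ZMod 2 where
  toFun a := w ⬝ᵥ ((J * a) *ᵥ w)
  map_add' a b := by rw [mul_add, add_mulVec, dotProduct_add]
  map_smul' c a := by simp [smul_mulVec]

lemma fw_Nv (J : Matrix I I (ZMod 2)) (hJt : Jᵀ = J) (w v) : fw J w (Nv J v) = BJ J v w := by
  show w ⬝ᵥ ((J * Nv J v) *ᵥ w) = _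
  rw [← mulVec_mulVec, Nv_mulVec, ← BJ_apply, map_smul, BJ_symm J hJt w v, smul_eq_mul]
  rcases z2_cases (BJ J v w) with h | h <;> rw [h] <;> rfl

lemma fw_conj (J : Matrix I I (ZMod 2)) (hJt : Jᵀ = J) (w u a) :
    fw J w ((1 + Nv J u) * a * (1 + Nv J u)) = fw J (w + BJ J u w • u) a := by
  rw [← tau_mulVec]
  show w ⬝ᵥ ((J * _) *ᵥ w) = ((1 + Nv J u) *ᵥ w) ⬝ᵥ ((J * a) *ᵥ ((1 + Nv J u) *ᵥ w))
  rw [← Matrix.vecMul_transpose (1 + Nv J u) w, ← Matrix.dotProduct_mulVec,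
    Matrix.vecMul_transpose, mulVec_mulVec, mulVec_mulVec,
    ← mul_assoc, ← mul_assoc, ← mul_assoc, tau_J J hJt]

lemma fw_add (J : Matrix I I (ZMod 2)) (hJt : Jᵀ = J) (a) (ha : aᵀ * J = J * a) (x y) :
    fw J (x + y) a = fw J x a + fw J y a := by
  show (x + y) ⬝ᵥ ((J * a) *ᵥ (x + y)) = x ⬝ᵥ ((J * a) *ᵥ x) + y ⬝ᵥ ((J * a) *ᵥ y)
  have hs : (J * a)ᵀ = J * a := by rw [Matrix.transpose_mul, hJt, ha]
  have h1 : x ⬝ᵥ ((J * a) *ᵥ y) = y ⬝ᵥ ((J * a) *ᵥ x) := by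
    conv_lhs => rw [Matrix.dotProduct_mulVec, ← Matrix.mulVec_transpose, hs, dotProduct_comm]
  rw [mulVec_add, add_dotProduct, dotProduct_add, dotProduct_add, h1]
  linear_combination CharTwo.add_self_eq_zero (y ⬝ᵥ ((J * a) *ᵥ x))

lemma fw_smul (J : Matrix I I (ZMod 2)) (a) (c : ZMod 2) (x) :
    fw J (c • x) a = c * fw J x a := by
  show (c • x) ⬝ᵥ ((J * a) *ᵥ (c • x)) = c * (x ⬝ᵥ ((J * a) *ᵥ x))
  rcases z2_cases c with rfl | rfl <;> simp

lemma lin_contra (O : Matrix I I ℤ_[2]) (hO : Oᵀ = -O) (hJt : (rho I O)ᵀ = rho I O)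
    (H : Subgroup (Matrix I I ℤ_[2])ˣ)
    (hSp : ∀ h ∈ H, (h : Matrix I I ℤ_[2])ᵀ * O * h = O)
    (hkill : ∀ w, ∀ a ∈ Lmod H 0, fw (rho I O) w a = 0)
    (u : I → ℤ_[2]) {m : ℕ} (v : Fin m → I → ℤ_[2]) (hsum : rv u = ∑ j, rv (v j))
    (horth : ∀ j, u ⬝ᵥ (O *ᵥ v j) = 0)
    (hu : ∃ h ∈ H, rho I (h : (Matrix I I ℤ_[2])ˣ) = 1 + Nv (rho I O) (rv u))
    (hv : ∀ j, ∃ h ∈ H, rho I (h : (Matrix I I ℤ_[2])ˣ) = 1 + Nv (rho I O) (rv (v j)))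
    (hwu : ∃ w, BJ (rho I O) (rv u) w = 1)
    (hwv : ∀ j, ∃ w, BJ (rho I O) (rv (v j)) w = 1 ∧ BJ (rho I O) (rv u) w = 0) : False := by
  obtain ⟨h, hh, hr⟩ := hu
  obtain ⟨A, hA, hAs⟩ := lift_T O hO u h (hSp h hh) hr
  have h1 : fw (rho I O) (rv u) (rho I A) = 1 := by
    obtain ⟨w, hw⟩ := hwu
    have h11 : (1 : ZMod 2) + 1 = 0 := by decide
    have := hkill w _ (R1 O hO u H h hh A hA)
    rw [map_add, map_add, fw_conj _ hJt, fw_Nv _ hJt, hw, one_smul, fw_add _ hJt _ hAs] at this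
    linear_combination this - CharTwo.add_self_eq_zero (fw (rho I O) w (rho I A))
      - h11
  have h2 : ∀ j, fw (rho I O) (rv (v j)) (rho I A) = 0 := by
    intro j
    obtain ⟨k, hk, hkr⟩ := hv j
    obtain ⟨B, hB, hBs⟩ := lift_T O hO (v j) k (hSp k hk) hkr
    obtain ⟨w, hw1, hw0⟩ := hwv j
    have := hkill w _ (R2 O hO u (v j) (horth j) H h k hh hk A B hA hB)
    rw [map_add, map_add, map_add, fw_conj _ hJt, fw_conj _ hJt, hw1, hw0, one_smul, zero_smul,
      add_zero, fw_add _ hJt _ hAs] at this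
    linear_combination this - CharTwo.add_self_eq_zero (fw (rho I O) w (rho I A))
      - CharTwo.add_self_eq_zero (fw (rho I O) w (rho I B))
  have h3 : ∀ s : Finset (Fin m), fw (rho I O) (∑ j ∈ s, rv (v j)) (rho I A) = 0 := by
    intro s
    induction s using Finset.induction_on with
    | empty => 
      rw [Finset.sum_empty]
      show (0 : I → ZMod 2) ⬝ᵥ _ = 0
      simp
    | insert a s ha ih => rw [Finset.sum_insert ha, fw_add _ hJt _ hAs, h2, ih, add_zero]
  rw [hsum, h3] at h1
  exact absurd h1 (by decide)

lemma core_L0 (O : Matrix I I ℤ_[2]) (hO : Oᵀ = -O) (hJJ : rho I O * rho I O = 1)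
    (H : Subgroup (Matrix I I ℤ_[2])ˣ)
    (hSp : ∀ h ∈ H, (h : Matrix I I ℤ_[2])ᵀ * O * h = O)
    {n : ℕ} (hn : 3 ≤ n) (hn2 : (n : ZMod 2) = 0)
    (d : Fin n → I → ZMod 2) (hd : ∑ i, d i = 0)
    (hdB : ∀ i j k l, BJ (rho I O) (d i + d j) (d k + d l) = (if i = k then 1 else 0)
      + (if i = l then 1 else 0) + (if j = k then 1 else 0) + (if j = l then 1 else 0))
    (hspan : ∀ p : Submodule (ZMod 2) (I → ZMod 2), (∀ i j, d i + d j ∈ p) → ∀ x, x ∈ p)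
    (hE : ∀ i j, ∃ h ∈ H, rho I (h : (Matrix I I ℤ_[2])ˣ) = 1 + Nv (rho I O) (d i + d j))
    (u : I → ℤ_[2]) {m : ℕ} (v : Fin m → I → ℤ_[2]) (hsum : rv u = ∑ j, rv (v j))
    (horth : ∀ j, u ⬝ᵥ (O *ᵥ v j) = 0)
    (hu : ∃ i j, rv u = d i + d j)
    (hv : ∀ j, ∃ i k, rv (v j) = d i + d k)
    (hwu : ∃ w, BJ (rho I O) (rv u) w = 1)
    (hwv : ∀ j, ∃ w, BJ (rho I O) (rv (v j)) w = 1 ∧ BJ (rho I O) (rv u) w = 0) :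
    ∀ a, aᵀ * rho I O = rho I O * a → a ∈ Lmod H 0 := by
  have hJt : (rho I O)ᵀ = rho I O := by
    rw [← rho_transpose, hO, map_neg, neg_eq_self_mat]
  have hdiag : ∀ i, rho I O i i = 0 := by
    intro i
    have h1 : O i i = - O i i := congrFun (congrFun hO i) i
    have h2 := self_eq_neg.1 h1
    simp [rho, h2]
  intro a ha
  by_contra hc
  obtain ⟨φ, hφa, hφL⟩ := Submodule.exists_le_ker_of_notMem hc
  let Q : Submodule (ZMod 2) ((I → ZMod 2) → ZMod 2) :=
    { carrier := {q | ∃ ψ : Matrix I I (ZMod 2) →ₗ[ZMod 2] ZMod 2,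
        (∀ a ∈ Lmod H 0, ψ a = 0) ∧ ∀ v, ψ (Nv (rho I O) v) = q v}
      zero_mem' := ⟨0, by simp, by simp⟩
      add_mem' := by
        rintro q q' ⟨ψ, h1, h2⟩ ⟨ψ', h1', h2'⟩
        exact ⟨ψ + ψ', fun a ha => by simp [h1 a ha, h1' a ha], fun v => by simp [h2, h2']⟩
      smul_mem' := by
        rintro c q ⟨ψ, h1, h2⟩
        exact ⟨c • ψ, fun a ha => by simp [h1 a ha], fun v => by simp [h2]⟩ }
  have hcomb := comb hn hn2 (BJ (rho I O)) (BJ_symm _ hJt) d hd hdB hspan Q ?_ ?_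
    (fun v => φ (Nv (rho I O) v)) ⟨φ, fun a ha => hφL ha, fun v => rfl⟩ ?_
  · rcases hcomb with hlin | ⟨i, j, h1, hinv⟩
    · refine lin_contra O hO hJt H hSp ?_ u v hsum horth ?_ ?_ hwu hwv
      · intro w a ha
        obtain ⟨ψ, h1, h2⟩ := hlin w
        have hsp : aᵀ * rho I O = rho I O * a := by
          obtain ⟨h, hh, A, hA, rfl⟩ := ha
          exact sp_of O 0 A (by rw [← hA]; exact hSp h hh)
        have := sp_fun (rho I O) hJt hJJ (ψ - fw (rho I O) w) (fun v => by
          rw [LinearMap.sub_apply, h2, fw_Nv _ hJt, sub_self]) a hsp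
        rw [LinearMap.sub_apply, h1 a ha, zero_sub, neg_eq_zero] at this
        exact this
      · obtain ⟨i, j, hij⟩ := hu
        rw [hij]; exact hE i j
      · intro k
        obtain ⟨i, j, hij⟩ := hv k
        rw [hij]; exact hE i j
    · obtain ⟨h, hh, hr⟩ := hE i j
      obtain ⟨u', hu'⟩ := rv_surj (d i + d j)
      rw [← hu'] at hr h1 hinv
      obtain ⟨A, hA, hAs⟩ := lift_T O hO u' h (hSp h hh) hr
      have h2 : φ _ = 0 := hφL (R1 O hO u' H h hh A hA)
      have h3 := sp_fun (rho I O) hJt hJJ (φ ∘ₗ (LinearMap.mulRight (ZMod 2)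
        (1 + Nv (rho I O) (rv u'))) ∘ₗ (LinearMap.mulLeft (ZMod 2)
        (1 + Nv (rho I O) (rv u'))) - φ) (fun v => by
          have := hinv v
          simp only [LinearMap.sub_apply, LinearMap.comp_apply, LinearMap.mulLeft_apply,
            LinearMap.mulRight_apply, tau_Nv _ hJt]
          rw [this, sub_self]) _ hAs
      simp only [LinearMap.sub_apply, LinearMap.comp_apply, LinearMap.mulLeft_apply,
            LinearMap.mulRight_apply] at h3
      rw [map_add, map_add, h1, sub_eq_zero.1 h3, add_assoc, CharTwo.add_self_eq_zero,
        add_zero] at h2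
      exact absurd h2 (by decide)
  · rintro q ⟨ψ, h1, h2⟩ i j
    obtain ⟨h, hh, hr⟩ := hE i j
    refine ⟨ψ ∘ₗ (LinearMap.mulRight (ZMod 2)
        (1 + Nv (rho I O) (d i + d j))) ∘ₗ (LinearMap.mulLeft (ZMod 2)
        (1 + Nv (rho I O) (d i + d j))), ?_, ?_⟩
    · intro a ha
      simp only [LinearMap.comp_apply, LinearMap.mulLeft_apply, LinearMap.mulRight_apply]
      exact h1 _ (L_conj H 0 h hh _ hr (tau_sq _ hJt hdiag _) a ha)
    · intro v
      simp only [LinearMap.comp_apply, LinearMap.mulLeft_apply, LinearMap.mulRight_apply]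
      rw [tau_Nv _ hJt, h2]
  · rintro q ⟨ψ, h1, h2⟩
    refine ⟨LinearMap.mk₂ (ZMod 2) (fun x y => ψ ((vecMulVec x y + vecMulVec y x) * rho I O))
      ?_ ?_ ?_ ?_, ?_, ?_⟩
    · intro x y z
      rw [← map_add, ← add_mul, add_vecMulVec, vecMulVec_add]; congr 2; abel
    · intro c x y
      rw [← map_smul, ← smul_mul_assoc, smul_vecMulVec, vecMulVec_smul, smul_add]
    · intro x y z
      rw [← map_add, ← add_mul, add_vecMulVec, vecMulVec_add]; congr 2; abel
    · intro c x y
      rw [← map_smul, ← smul_mul_assoc, smul_vecMulVec, vecMulVec_smul, smul_add]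
    · intro x y
      rw [LinearMap.mk₂_apply, ← h2, ← h2, ← h2, ← map_add, ← map_add]
      simp only [Nv, ← add_mul, add_vecMulVec, vecMulVec_add]
      congr 2; abel
    · intro x
      rw [LinearMap.mk₂_apply, add_mul, map_add]
      exact CharTwo.add_self_eq_zero _
  · intro h0
    exact hφa (sp_fun (rho I O) hJt hJJ φ (fun v => congrFun h0 v) a ha)

end rel
section concrete
open Matrix

/-- coordinates of the class of `ē_1 + ē_{k+1}` -/
def dvec (g : ℕ) (k : Fin (2*g+2)) : Fin (2*g) → ZMod 2 := fun c =>
  if (k : ℕ) % 2 = 1 then (if (c : ℕ) < k then 1 else 0)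
  else (if (c : ℕ) + 2 < k ∨ (c : ℕ) + 1 = k then 1 else 0)

/-- integral vector -/
def uZ (g : ℕ) : Fin (2*g) → ℤ := fun c => if (c : ℕ) = 0 then 1 else 0

/-- integral vectors -/
def vZ (g : ℕ) (j : Fin g) : Fin (2*g) → ℤ := fun c =>
  if (c : ℕ) = 2 * j ∨ (c : ℕ) = 2 * j + 2 then 1 else 0

/-- the finite checks -/
structure Facts (g : ℕ) : Prop where
  F1 : OmegaMat g (ZMod 2) * OmegaMat g (ZMod 2) = 1
  F2 : (OmegaMat g ℤ)ᵀ = - OmegaMat g ℤ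
  F3 : ∑ i, dvec g i = 0
  F4 : ∀ i k, dvec g i ⬝ᵥ (OmegaMat g (ZMod 2) *ᵥ dvec g k) = 1 + (if k = 0 then 1 else 0)
    + (if i = 0 then 1 else 0) + (if i = k then 1 else 0)
  F5 : ∀ c, ∑ i, PsiMat g i c • dvec g i = Pi.single c 1
  F6 : ∀ i, ∃ s : ZMod 2, ∀ k, (PsiMat g *ᵥ dvec g i) k = (if k = 0 then 1 else 0)
    + (if k = i then 1 else 0) + s
  F7 : ∀ i c, (dvec g i ᵥ* OmegaMat g (ZMod 2)) c = PsiMat g 0 c + PsiMat g i c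
  F8 : ∀ j, uZ g ⬝ᵥ (OmegaMat g ℤ *ᵥ vZ g j) = 0
  F9 : (fun c => (uZ g c : ZMod 2)) = ∑ j, fun c => (vZ g j c : ZMod 2)
  F10 : (fun c => (uZ g c : ZMod 2)) = dvec g 0 + dvec g 1
  F11 : ∀ j, ∃ i k, (fun c => (vZ g j c : ZMod 2)) = dvec g i + dvec g k
  F12 : ∃ c, ((fun c => (uZ g c : ZMod 2)) ᵥ* OmegaMat g (ZMod 2)) c = 1
  F13 : ∀ j, ∃ c, ((fun c => (vZ g j c : ZMod 2)) ᵥ* OmegaMat g (ZMod 2)) c = 1 ∧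
    ((fun c => (uZ g c : ZMod 2)) ᵥ* OmegaMat g (ZMod 2)) c = 0

set_option maxRecDepth 100000 in
set_option maxHeartbeats 4000000 in
lemma facts2 : Facts 2 := by
  constructor <;> decide

set_option maxRecDepth 100000 in
set_option maxHeartbeats 4000000 in
lemma facts3 : Facts 3 := by
  constructor <;> decide

end concrete
section assemble
open Matrix

lemma rho_Omega (g : ℕ) : rho (Fin (2*g)) (OmegaMat g ℤ_[2]) = OmegaMat g (ZMod 2) := by
  ext i j
  simp only [rho, RingHom.mapMatrix_apply, Matrix.map_apply, OmegaMat, Matrix.of_apply]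
  split_ifs <;> simp

lemma Omega_cast (g : ℕ) :
    (Int.castRingHom ℤ_[2]).mapMatrix (OmegaMat g ℤ) = OmegaMat g ℤ_[2] := by
  ext i j
  simp only [RingHom.mapMatrix_apply, Matrix.map_apply, OmegaMat, Matrix.of_apply]
  split_ifs <;> simp

lemma BJ_single {I : Type} [Fintype I] [DecidableEq I] (J : Matrix I I (ZMod 2)) (x : I → ZMod 2)
    (c : I) : BJ J x (Pi.single c 1) = (x ᵥ* J) c := by
  rw [BJ_apply, Matrix.dotProduct_mulVec]; simp

lemma repr_swap (g : ℕ) (F : Facts g) (i j : Fin (2*g+2)) :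
    representsPerm g (1 + Nv (OmegaMat g (ZMod 2)) (dvec g i + dvec g j)) (Equiv.swap i j) := by
  intro c
  obtain ⟨s, hs⟩ := F.F6 i
  obtain ⟨s', hs'⟩ := F.F6 j
  refine Submodule.mem_span_singleton.2 ⟨(s + s') * (PsiMat g i c + PsiMat g j c), ?_⟩
  ext k
  have h1 : (PsiMat g * ((1 + Nv (OmegaMat g (ZMod 2)) (dvec g i + dvec g j)) :
      Matrix (Fin (2*g)) (Fin (2*g)) (ZMod 2)) : Matrix (Fin (2*g+2)) (Fin (2*g)) (ZMod 2)) k c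
      = PsiMat g k c + (PsiMat g *ᵥ (dvec g i + dvec g j)) k
        * ((dvec g i + dvec g j) ᵥ* OmegaMat g (ZMod 2)) c := by
    rw [Matrix.mul_add, Matrix.mul_one, Nv, Matrix.vecMulVec_mul, Matrix.mul_vecMulVec]
    rfl
  have h2 : (permMat g (Equiv.swap i j) * PsiMat g) k c = PsiMat g (Equiv.swap i j k) c := by
    rw [Matrix.mul_apply, Finset.sum_eq_single (Equiv.swap i j k)]
    · simp [permMat]
    · intro b _ hb
      have : Equiv.swap i j b ≠ k := by
        rintro rfl; simp at hb
      simp [permMat, this]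
    · simp
  rw [Matrix.sub_apply, h1, h2, Matrix.mulVec_add, Matrix.add_vecMul, Pi.add_apply, Pi.add_apply,
    hs, hs', F.F7, F.F7]
  show (s + s') * (PsiMat g i c + PsiMat g j c) * 1 = _
  have two : (2 : ZMod 2) = 0 := rfl
  by_cases hki : k = i
  · subst hki
    rw [Equiv.swap_apply_left]
    by_cases hkj : k = j
    · subst hkj
      simp only [if_true]
      generalize PsiMat g k c = a
      generalize PsiMat g 0 c = b
      generalize (if k = 0 then (1 : ZMod 2) else 0) = e
      linear_combination ((s+s')*a - (2*e+2+s+s')*(a+b)) * two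
    · simp only [if_true, if_neg hkj]
      generalize PsiMat g k c = a
      generalize PsiMat g j c = a'
      generalize PsiMat g 0 c = b
      generalize (if k = 0 then (1 : ZMod 2) else 0) = e
      linear_combination (- (e + s + s') * b - e*(a+a') - b*(e+1) - a ) * two
  · by_cases hkj : k = j
    · subst hkj
      rw [Equiv.swap_apply_right]
      simp only [if_true, if_neg hki]
      generalize PsiMat g k c = a
      generalize PsiMat g i c = a'
      generalize PsiMat g 0 c = b
      generalize (if k = 0 then (1 : ZMod 2) else 0) = e
      linear_combination (- a - (e + s + s') * b - e*(a+a') - b*(e+1)) * two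
    · rw [Equiv.swap_apply_of_ne_of_ne hki hkj]
      simp only [if_neg hki, if_neg hkj]
      generalize PsiMat g k c = a
      generalize PsiMat g i c = a'
      generalize PsiMat g j c = a''
      generalize PsiMat g 0 c = b
      generalize (if k = 0 then (1 : ZMod 2) else 0) = e
      linear_combination (-(e + s + s') * b - e*(a'+a'') - b*e) * two

lemma final_aux (g : ℕ) (F : Facts g)
    (H : Subgroup (GL (Fin (2*g)) ℤ_[2]))
    (hclosed : IsClosed (H : Set (GL (Fin (2*g)) ℤ_[2])))
    (hsub : (H : Set (GL (Fin (2*g)) ℤ_[2])) ⊆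
      {x | x ∈ SpSet g ℤ_[2] ∧ ∃ σ : Equiv.Perm (Fin (2*g+2)),
        representsPerm g ((redMod2 g x : GL (Fin (2*g)) (ZMod 2))
          : Matrix (Fin (2*g)) (Fin (2*g)) (ZMod 2)) σ})
    (himg : ∀ B : GL (Fin (2*g)) (ZMod 2),
      (∃ σ : Equiv.Perm (Fin (2*g+2)),
        representsPerm g (B : Matrix (Fin (2*g)) (Fin (2*g)) (ZMod 2)) σ)
      ↔ B ∈ Subgroup.map (redMod2 g) H) :
    (H : Set (GL (Fin (2*g)) ℤ_[2]))
      = {x | x ∈ SpSet g ℤ_[2] ∧ ∃ σ : Equiv.Perm (Fin (2*g+2)),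
          representsPerm g ((redMod2 g x : GL (Fin (2*g)) (ZMod 2))
            : Matrix (Fin (2*g)) (Fin (2*g)) (ZMod 2)) σ} := by
  have hrO := rho_Omega g
  have hO : (OmegaMat g ℤ_[2])ᵀ = - OmegaMat g ℤ_[2] := by
    rw [← Omega_cast, ← map_neg, ← F.F2]
    ext i j; simp
  have hJJ : rho _ (OmegaMat g ℤ_[2]) * rho _ (OmegaMat g ℤ_[2]) = 1 := by rw [hrO]; exact F.F1
  have hJt : (rho _ (OmegaMat g ℤ_[2]))ᵀ = rho _ (OmegaMat g ℤ_[2]) := by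
    rw [← rho_transpose, hO, map_neg, neg_eq_self_mat]
  have hdiag : ∀ i, rho _ (OmegaMat g ℤ_[2]) i i = 0 := by
    intro i
    have h1 : OmegaMat g ℤ_[2] i i = - OmegaMat g ℤ_[2] i i := congrFun (congrFun hO i) i
    have h2 := self_eq_neg.1 h1
    simp [rho, h2]
  have hSp : ∀ h ∈ H, (h : Matrix (Fin (2*g)) (Fin (2*g)) ℤ_[2])ᵀ * OmegaMat g ℤ_[2] * h
      = OmegaMat g ℤ_[2] := fun h hh => (hsub hh).1
  have hred : ∀ h : GL (Fin (2*g)) ℤ_[2],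
      ((redMod2 g h : GL (Fin (2*g)) (ZMod 2)) : Matrix (Fin (2*g)) (Fin (2*g)) (ZMod 2))
      = rho _ (h : Matrix (Fin (2*g)) (Fin (2*g)) ℤ_[2]) := fun h => rfl
  have hg0 : dvec g 0 = 0 := by
    ext c; simp [dvec]
  have hE : ∀ i j, ∃ h ∈ H, rho _ (h : GL (Fin (2*g)) ℤ_[2]).val
      = 1 + Nv (rho _ (OmegaMat g ℤ_[2])) (dvec g i + dvec g j) := by
    intro i j
    have hsq := tau_sq _ hJt hdiag (dvec g i + dvec g j)
    obtain ⟨h, hh, e⟩ := (himg ⟨_, _, hsq, hsq⟩).1 ⟨Equiv.swap i j, by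
      show representsPerm g (1 + Nv (rho _ (OmegaMat g ℤ_[2])) (dvec g i + dvec g j)) _
      rw [hrO]; exact repr_swap g F i j⟩
    exact ⟨h, hh, by rw [← hred, e]⟩
  have hru : rv (fun c => (uZ g c : ℤ_[2])) = fun c => (uZ g c : ZMod 2) := by
    ext c; simp [rv]
  have hrvv : ∀ j, rv (fun c => (vZ g j c : ℤ_[2])) = fun c => (vZ g j c : ZMod 2) := by
    intro j; ext c; simp [rv]
  have hL0 := core_L0 (OmegaMat g ℤ_[2]) hO hJJ H hSp (n := 2*g+2) ?_ ?_ (dvec g) F.F3 ?_ ?_ hE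
    (fun c => (uZ g c : ℤ_[2])) (fun j c => (vZ g j c : ℤ_[2])) ?_ ?_ ?_ ?_ ?_ ?_
  · ext x
    refine ⟨fun hx => hsub hx, ?_⟩
    rintro ⟨hxS, hxσ⟩
    obtain ⟨h, hh, e⟩ := (himg _).1 hxσ
    have hy : h⁻¹ * x ∈ H := by
      refine mem_of_closed H hclosed _ (closure_step (OmegaMat g ℤ_[2]) H hSp
        (L_up _ hJt hJJ hdiag H hL0) _ ?_ ?_)
      · have h1 := hSp _ (H.inv_mem hh)
        have h2 : (x : Matrix (Fin (2*g)) (Fin (2*g)) ℤ_[2])ᵀ * OmegaMat g ℤ_[2] * x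
          = OmegaMat g ℤ_[2] := hxS
        rw [Units.val_mul, Matrix.transpose_mul]
        generalize ((h⁻¹ : GL (Fin (2*g)) ℤ_[2]) : Matrix (Fin (2*g)) (Fin (2*g)) ℤ_[2]) = k at h1 ⊢
        calc (x : Matrix (Fin (2*g)) (Fin (2*g)) ℤ_[2])ᵀ * kᵀ * OmegaMat g ℤ_[2] * (k * x)
            = (x : Matrix (Fin (2*g)) (Fin (2*g)) ℤ_[2])ᵀ * (kᵀ * OmegaMat g ℤ_[2] * k) * x := by
              simp only [mul_assoc]
          _ = _ := by rw [h1, h2]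
      · rw [← hred, map_mul, map_inv, e, inv_mul_cancel, Units.val_one]
    have := H.mul_mem hh hy
    rwa [mul_inv_cancel_left] at this
  · have := F.F12
    obtain ⟨c, -⟩ := this
    have := c.2
    omega
  · push_cast
    have two : (2 : ZMod 2) = 0 := rfl
    rw [two]; simp
  · intro i j k l
    rw [hrO]
    simp only [map_add, LinearMap.add_apply]
    rw [BJ_apply, BJ_apply, BJ_apply, BJ_apply, F.F4, F.F4, F.F4, F.F4]
    have two : (2 : ZMod 2) = 0 := rfl
    linear_combination (2 + (if k = 0 then 1 else 0) + (if l = 0 then 1 else 0)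
      + (if i = 0 then 1 else 0) + (if j = 0 then 1 else 0)) * two
  · intro p hp x
    have h1 : ∀ i, dvec g i ∈ p := fun i => by simpa [hg0] using hp 0 i
    have h2 : ∀ c, Pi.single c (1 : ZMod 2) ∈ p := fun c => by
      rw [← F.F5 c]; exact p.sum_mem fun i _ => p.smul_mem _ (h1 i)
    rw [pi_eq_sum_univ' x]
    exact p.sum_mem fun c _ => p.smul_mem _ (by
      convert h2 c using 1)
  · simp only [hru, hrvv]; exact F.F9
  · intro j
    have := congrArg (Int.castRingHom ℤ_[2]) (F.F8 j)
    rw [← Omega_cast]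
    simpa [dotProduct, mulVec, map_sum] using this
  · rw [hru]; exact ⟨0, 1, F.F10⟩
  · intro j
    rw [hrvv]; exact F.F11 j
  · obtain ⟨c, hc⟩ := F.F12
    exact ⟨Pi.single c 1, by rw [BJ_single, hru, hrO, hc]⟩
  · intro j
    obtain ⟨c, hc, hc'⟩ := F.F13 j
    exact ⟨Pi.single c 1, by rw [BJ_single, hrvv, hrO, hc], by rw [BJ_single, hru, hrO, hc']⟩

end assemble

/-- Let `g ∈ {2,3}` and let `S̃_{2g+2} ⊆ Sp_{2g}(ℤ_2)` be the full preimage of the embedded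
copy of `S_{2g+2} ⊆ Sp_{2g}(ℤ/2ℤ)` under mod-2 reduction. If `H ⊆ S̃_{2g+2}` is a closed
subgroup whose mod-2 image equals the full embedded `S_{2g+2}`, then `H = S̃_{2g+2}`. -/
theorem maximal_monodromy_stmt13 (g : ℕ) (hg : g = 2 ∨ g = 3)
    (H : Subgroup (GL (Fin (2*g)) ℤ_[2]))
    (hclosed : IsClosed (H : Set (GL (Fin (2*g)) ℤ_[2])))
    (hsub : (H : Set (GL (Fin (2*g)) ℤ_[2])) ⊆
      {x | x ∈ SpSet g ℤ_[2] ∧ ∃ σ : Equiv.Perm (Fin (2*g+2)),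
        representsPerm g ((redMod2 g x : GL (Fin (2*g)) (ZMod 2))
          : Matrix (Fin (2*g)) (Fin (2*g)) (ZMod 2)) σ})
    (himg : ∀ B : GL (Fin (2*g)) (ZMod 2),
      (∃ σ : Equiv.Perm (Fin (2*g+2)),
        representsPerm g (B : Matrix (Fin (2*g)) (Fin (2*g)) (ZMod 2)) σ)
      ↔ B ∈ Subgroup.map (redMod2 g) H) :
    (H : Set (GL (Fin (2*g)) ℤ_[2]))
      = {x | x ∈ SpSet g ℤ_[2] ∧ ∃ σ : Equiv.Perm (Fin (2*g+2)),
          representsPerm g ((redMod2 g x : GL (Fin (2*g)) (ZMod 2))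
            : Matrix (Fin (2*g)) (Fin (2*g)) (ZMod 2)) σ} := by
  rcases hg with rfl | rfl
  · exact final_aux 2 facts2 H hclosed hsub himg
  · exact final_aux 3 facts3 H hclosed hsub himg
end
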